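/- arXiv:math/0510273 — 3 statements merged into one kernel-verified Lean document; each statement's English description precedes it below -/
import Mathlib

section
/- Let F be a distribution on [0,∞) with Laplace transform φ(γ) = ∫ e^{γx} F(dx) and γ̂ = sup{γ : φ(γ) < ∞} ∈ (0,∞]. If for every fixed y > 0, liminf_{x→∞} F̄(x−y)/F̄(x) ≥ e^{γ̂ y}, then liminf_{x→∞} (F*F)‾(x)/F̄(x) = 2φ(γ̂) (where both sides may be infinite). -/
/-!
Let `X` and `Y` be independent with law `F`. The lower bound is Fatou's lemma: the events
`X < x / 2 < x - X < Y` and `Y < x / 2 < x - Y < X` are disjoint, so `(F * F)‾ x` is at least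
`2 ∫ F̄ (x - y) F(dy)` over `y < x / 2`.

For the upper bound, suppose `(F * F)‾ ≥ K F̄` near infinity with `K > 2 φ(γ̂)` and `γ̂` finite.
Test this domination against `G = m E`, where `E x = e ^ (γ̂ x + m x)` and `m x = min (η x⁺) b`.
Since `m` is subadditive, `G (x + y) ≤ G x E y + E x G y`, so `K ∫ G ≤ 2 (∫ E) (∫ G) + O(η)`. As
`φ(γ̂ + η) = ∞`, the level `b` can be chosen so that `∫ E` is a fixed `q` with `φ(γ̂) < q < K / 2`;
then `∫ G = O(η)`, and `E ≤ e ^ (γ̂ x) + G` gives `q ≤ φ(γ̂) + O(η)`, which is false for small `η`.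
-/

open MeasureTheory Filter Real Set
open scoped ENNReal Topology

noncomputable section

/-- Convolution of two measures on ℝ: distribution of the sum of independent r.v.'s. -/
def mconv (μ ν : MeasureTheory.Measure ℝ) : MeasureTheory.Measure ℝ :=
  MeasureTheory.Measure.map (fun p : ℝ × ℝ => p.1 + p.2) (μ.prod ν)

/-- The tail F̄(x) = F(x,∞). -/
def tail (F : MeasureTheory.Measure ℝ) (x : ℝ) : ℝ≥0∞ := F (Set.Ioi x)

/-- Laplace transform φ(γ) = ∫ e^{γx} F(dx), with value in [0,∞]. -/
def phi (F : MeasureTheory.Measure ℝ) (γ : ℝ) : ℝ≥0∞ :=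
  ∫⁻ x, ENNReal.ofReal (Real.exp (γ * x)) ∂F

/-- F is heavy-tailed: φ(γ) = ∞ for every γ > 0. -/
def IsHeavyTailed (F : MeasureTheory.Measure ℝ) : Prop :=
  ∀ γ : ℝ, 0 < γ → phi F γ = ⊤

/-- γ̂ = sup{γ : φ(γ) < ∞} ∈ [0,∞] (for distributions on [0,∞)). -/
def gammaHat (F : MeasureTheory.Measure ℝ) : ℝ≥0∞ :=
  sSup {p : ℝ≥0∞ | ∃ γ : ℝ, p = ENNReal.ofReal γ ∧ phi F γ < ⊤}

/-- φ(γ̂) = lim_{γ↑γ̂} φ(γ), realized (by monotonicity of φ) as sup over γ < γ̂. -/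
def phiHat (F : MeasureTheory.Measure ℝ) : ℝ≥0∞ :=
  ⨆ (γ : ℝ) (_ : ENNReal.ofReal γ < gammaHat F ∨ γ < 0), phi F γ

/-- e^{γ̂ y} ∈ (0,∞], realized as sup of e^{γy} over γ < γ̂ (equals e^{γ̂y} by continuity,
and ∞ when γ̂ = ∞). -/
def expGammaHat (F : MeasureTheory.Measure ℝ) (y : ℝ) : ℝ≥0∞ :=
  ⨆ (γ : ℝ) (_ : ENNReal.ofReal γ < gammaHat F ∨ γ < 0), ENNReal.ofReal (Real.exp (γ * y))

section LowerBound

variable {F : Measure ℝ}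

lemma tail_antitone (F : Measure ℝ) : Antitone (tail F) :=
  fun _ _ h => measure_mono (Ioi_subset_Ioi h)

lemma measurable_tail_const_sub (F : Measure ℝ) (x : ℝ) : Measurable fun y => tail F (x - y) :=
  (tail_antitone F).measurable.comp (measurable_const.sub measurable_id)

lemma prod_setOf_fst_lt_and_lt_add [SFinite F] (a x : ℝ) :
    (F.prod F) {p | p.1 < a ∧ x < p.1 + p.2} = ∫⁻ y in Iio a, tail F (x - y) ∂F := by
  have hS : MeasurableSet {p : ℝ × ℝ | p.1 < a ∧ x < p.1 + p.2} := by measurability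
  rw [Measure.prod_apply hS, ← lintegral_indicator measurableSet_Iio]
  refine lintegral_congr fun y => ?_
  by_cases hy : y < a
  · simp [hy, tail, Ioi, sub_lt_iff_lt_add']
  · simp [hy]

lemma two_mul_setLIntegral_tail_le_tail_mconv [SFinite F] (x : ℝ) :
    2 * ∫⁻ y in Iio (x / 2), tail F (x - y) ∂F ≤ tail (mconv F F) x := by
  let S : Set (ℝ × ℝ) := {p | p.1 < x / 2 ∧ x < p.1 + p.2}
  have hS : MeasurableSet S := by measurability
  have hswap : (F.prod F) (Prod.swap ⁻¹' S) = (F.prod F) S :=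
    Measure.measurePreserving_swap.measure_preimage hS.nullMeasurableSet
  have hdisj : Disjoint S (Prod.swap ⁻¹' S) := by
    rw [Set.disjoint_left]
    rintro p ⟨h₁, h⟩ ⟨h₂, -⟩
    simp only [Prod.fst_swap] at h₂
    linarith
  calc 2 * ∫⁻ y in Iio (x / 2), tail F (x - y) ∂F
      = (F.prod F) (S ∪ Prod.swap ⁻¹' S) := by
        rw [measure_union hdisj (measurable_swap hS), hswap, ← two_mul,
          prod_setOf_fst_lt_and_lt_add]
    _ ≤ (F.prod F) ((fun p : ℝ × ℝ => p.1 + p.2) ⁻¹' Ioi x) := by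
        refine measure_mono ?_
        rintro p (⟨-, h⟩ | ⟨-, h⟩)
        · exact h
        · simpa [add_comm] using h
    _ = tail (mconv F F) x := by
        rw [tail, mconv, Measure.map_apply (by fun_prop) measurableSet_Ioi]

theorem two_mul_lintegral_liminf_tail_div_le [SFinite F] :
    2 * ∫⁻ y, liminf (fun x => tail F (x - y) / tail F x) atTop ∂F ≤
      liminf (fun x => tail (mconv F F) x / tail F x) atTop := by
  let u : ℝ → ℝ → ℝ≥0∞ := fun x => (Iio (x / 2)).indicator fun y => tail F (x - y) / tail F x
  have hu : ∀ x, Measurable (u x) := fun x =>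
    ((measurable_tail_const_sub F x).div_const _).indicator measurableSet_Iio
  have hliminf : ∀ y, liminf (fun x => tail F (x - y) / tail F x) atTop
      = liminf (fun x => u x y) atTop := by
    refine fun y => liminf_congr ?_
    filter_upwards [eventually_gt_atTop (2 * y)] with x hx
    have hy : y ∈ Iio (x / 2) := mem_Iio.2 (by linarith)
    exact (indicator_of_mem hy fun y => tail F (x - y) / tail F x).symm
  calc 2 * ∫⁻ y, liminf (fun x => tail F (x - y) / tail F x) atTop ∂F
      ≤ 2 * liminf (fun x => ∫⁻ y, u x y ∂F) atTop := by
        simp_rw [hliminf]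
        gcongr
        exact lintegral_liminf_le hu
    _ = liminf (fun x => 2 * ∫⁻ y, u x y ∂F) atTop :=
        (ENNReal.liminf_const_mul_of_ne_top ENNReal.ofNat_ne_top).symm
    _ ≤ liminf (fun x => tail (mconv F F) x / tail F x) atTop := by
        refine liminf_le_liminf (.of_forall fun x => ?_)
        simp_rw [u, lintegral_indicator measurableSet_Iio, div_eq_mul_inv]
        rw [lintegral_mul_const _ (measurable_tail_const_sub F x), ← mul_assoc]
        gcongr
        exact two_mul_setLIntegral_tail_le_tail_mconv x

lemma ofReal_exp_le_expGammaHat {γ : ℝ} (hγ : ENNReal.ofReal γ < gammaHat F ∨ γ < 0) (y : ℝ) :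
    ENNReal.ofReal (exp (γ * y)) ≤ expGammaHat F y :=
  le_iSup₂ (f := fun γ (_ : ENNReal.ofReal γ < gammaHat F ∨ γ < 0) =>
    ENNReal.ofReal (exp (γ * y))) γ hγ

lemma phi_le_lintegral_expGammaHat {γ : ℝ} (hγ : ENNReal.ofReal γ < gammaHat F ∨ γ < 0) :
    phi F γ ≤ ∫⁻ y, expGammaHat F y ∂F :=
  lintegral_mono fun y => ofReal_exp_le_expGammaHat hγ y

lemma expGammaHat_zero_le_one (F : Measure ℝ) : expGammaHat F 0 ≤ 1 :=
  iSup₂_le fun γ _ => by rw [mul_zero, exp_zero, ENNReal.ofReal_one]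

theorem two_mul_phiHat_le_liminf [IsFiniteMeasure F] (hsupp : F (Iio 0) = 0)
    (hub : ∀ x, tail F x ≠ 0)
    (hins : ∀ y, 0 < y → expGammaHat F y ≤ liminf (fun x => tail F (x - y) / tail F x) atTop) :
    2 * phiHat F ≤ liminf (fun x => tail (mconv F F) x / tail F x) atTop := by
  have hphi : phiHat F ≤ ∫⁻ y, expGammaHat F y ∂F :=
    iSup₂_le fun γ hγ => phi_le_lintegral_expGammaHat hγ
  refine le_trans (mul_le_mul_right (hphi.trans (lintegral_mono_ae ?_)) 2)
    two_mul_lintegral_liminf_tail_div_le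
  have hnonneg : ∀ᵐ y ∂F, 0 ≤ y := by simpa [ae_iff, Iio] using hsupp
  filter_upwards [hnonneg] with y hy
  obtain rfl | hy := hy.eq_or_lt
  · have hone : ∀ x, tail F (x - 0) / tail F x = 1 := fun x => by
      rw [sub_zero, ENNReal.div_self (hub x) (measure_ne_top F _)]
    simpa only [hone, liminf_const] using expGammaHat_zero_le_one F
  · exact hins y hy

end LowerBound

section TailDomination

variable {μ ν : Measure ℝ}

lemma measure_le_of_measure_Ioi_le (h : ∀ x, μ (Ioi x) ≤ ν (Ioi x)) {S : Set ℝ}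
    (hS : IsOpen S) (hup : IsUpperSet S) : μ S ≤ ν S := by
  let T : Set ℚ := {q | (q : ℝ) ∈ S}
  have hST : S = ⋃ q ∈ T, Ioi (q : ℝ) := by
    refine Subset.antisymm (fun x hx => ?_) (iUnion₂_subset fun q hq => hup.Ioi_subset hq)
    obtain ⟨l, hl, hlS⟩ := exists_Ioc_subset_of_mem_nhds (hS.mem_nhds hx) ⟨x - 1, by linarith⟩
    obtain ⟨q, hlq, hqx⟩ := exists_rat_btwn hl
    exact mem_iUnion₂.2 ⟨q, hlS ⟨hlq, hqx.le⟩, hqx⟩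
  have hdir : DirectedOn (Function.onFun (· ⊆ ·) fun q : ℚ => Ioi (q : ℝ)) T := by
    refine fun p hp q hq => ⟨min p q, ?_, ?_, ?_⟩
    · obtain hpq | hpq := min_choice p q <;> rwa [hpq]
    · exact Ioi_subset_Ioi (mod_cast min_le_left p q)
    · exact Ioi_subset_Ioi (mod_cast min_le_right p q)
  rw [hST, measure_biUnion_eq_iSup T.to_countable hdir,
    measure_biUnion_eq_iSup T.to_countable hdir]
  exact iSup₂_mono fun q _ => h q

lemma lintegral_le_of_measure_Ioi_le (h : ∀ x, μ (Ioi x) ≤ ν (Ioi x)) {f : ℝ → ℝ}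
    (hf₀ : ∀ x, 0 ≤ f x) (hf : LowerSemicontinuous f) (hmono : Monotone f) :
    ∫⁻ x, ENNReal.ofReal (f x) ∂μ ≤ ∫⁻ x, ENNReal.ofReal (f x) ∂ν := by
  rw [lintegral_eq_lintegral_meas_lt μ (.of_forall hf₀) hf.measurable.aemeasurable,
    lintegral_eq_lintegral_meas_lt ν (.of_forall hf₀) hf.measurable.aemeasurable]
  exact lintegral_mono fun t => measure_le_of_measure_Ioi_le h (hf.isOpen_preimage t)
    fun _ _ hxy hx => hx.trans_le (hmono hxy)

lemma const_mul_lintegral_le_of_tail_le {K : ℝ≥0∞} {x₀ : ℝ}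
    (hK : ∀ x ≥ x₀, K * tail μ x ≤ tail ν x) {f : ℝ → ℝ} (hf₀ : ∀ x, 0 ≤ f x)
    (hf : LowerSemicontinuous f) (hmono : Monotone f) :
    K * ∫⁻ x, ENNReal.ofReal (f x) ∂μ ≤
      ∫⁻ x, ENNReal.ofReal (f x) ∂ν + K * (ENNReal.ofReal (f x₀) * μ univ) := by
  have hdom : ∀ x, (K • μ.restrict (Ioi x₀)) (Ioi x) ≤ ν (Ioi x) := fun x => by
    rw [Measure.smul_apply, smul_eq_mul, Measure.restrict_apply measurableSet_Ioi, Ioi_inter_Ioi]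
    exact (hK _ le_sup_right).trans (tail_antitone ν le_sup_left)
  have hbelow : ∫⁻ x in Iic x₀, ENNReal.ofReal (f x) ∂μ ≤ ENNReal.ofReal (f x₀) * μ univ :=
    calc ∫⁻ x in Iic x₀, ENNReal.ofReal (f x) ∂μ
        ≤ ∫⁻ _ in Iic x₀, ENNReal.ofReal (f x₀) ∂μ :=
          setLIntegral_mono' measurableSet_Iic fun x hx => ENNReal.ofReal_le_ofReal (hmono hx)
      _ = ENNReal.ofReal (f x₀) * μ (Iic x₀) := setLIntegral_const _ _
      _ ≤ ENNReal.ofReal (f x₀) * μ univ := by gcongr; exact subset_univ _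
  rw [← lintegral_add_compl _ measurableSet_Ioi (μ := μ) (A := Ioi x₀), compl_Ioi, mul_add]
  gcongr
  rw [← smul_eq_mul, ← lintegral_smul_measure]
  exact lintegral_le_of_measure_Ioi_le hdom hf₀ hf hmono

lemma lintegral_mconv_le_of_map_add_le [SFinite μ] {f e : ℝ → ℝ≥0∞} (hf : Measurable f)
    (he : Measurable e) (hadd : ∀ x y, f (x + y) ≤ f x * e y + e x * f y) :
    ∫⁻ x, f x ∂(mconv μ μ) ≤ 2 * (∫⁻ x, e x ∂μ) * ∫⁻ x, f x ∂μ :=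
  calc ∫⁻ x, f x ∂(mconv μ μ)
      = ∫⁻ p, f (p.1 + p.2) ∂(μ.prod μ) := lintegral_map hf (by fun_prop)
    _ ≤ ∫⁻ p, (f p.1 * e p.2 + e p.1 * f p.2) ∂(μ.prod μ) := lintegral_mono fun p => hadd p.1 p.2
    _ = (∫⁻ x, f x ∂μ) * (∫⁻ x, e x ∂μ) + (∫⁻ x, e x ∂μ) * ∫⁻ x, f x ∂μ := by
        rw [lintegral_add_left (by fun_prop), lintegral_prod_mul hf.aemeasurable he.aemeasurable,
          lintegral_prod_mul he.aemeasurable hf.aemeasurable]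
    _ = 2 * (∫⁻ x, e x ∂μ) * ∫⁻ x, f x ∂μ := by ring

end TailDomination

section ExpWeight

/-- The exponential weight `e ^ (γ x + m x)`: the integrand of `phi` at `γ`, perturbed by `m`.
It and its multiple by `m` are the test functions for the upper bound. -/
def expWeight (γ : ℝ) (m : ℝ → ℝ) (x : ℝ) : ℝ := exp (γ * x + m x)

/-- The perturbations `m` used in `expWeight`: nonnegative, monotone, continuous and
subadditive on the whole line. -/
structure IsSubaddExponent (m : ℝ → ℝ) : Prop where
  nonneg : ∀ x, 0 ≤ m x
  monotone : Monotone m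
  continuous : Continuous m
  map_add_le : ∀ x y, m (x + y) ≤ m x + m y

variable {F : Measure ℝ} {γ : ℝ} {m : ℝ → ℝ}

lemma expWeight_pos (γ : ℝ) (m : ℝ → ℝ) (x : ℝ) : 0 < expWeight γ m x := exp_pos _

lemma continuous_expWeight (hm : Continuous m) : Continuous (expWeight γ m) := by
  unfold expWeight
  fun_prop

lemma monotone_expWeight (hγ : 0 ≤ γ) (hm : Monotone m) : Monotone (expWeight γ m) :=
  fun _ _ h => exp_le_exp.2 (add_le_add (mul_le_mul_of_nonneg_left h hγ) (hm h))

lemma measurable_ofReal_expWeight (hm : Continuous m) :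
    Measurable fun x => ENNReal.ofReal (expWeight γ m x) :=
  (continuous_expWeight hm).measurable.ennreal_ofReal

lemma exp_le_one_add_mul_exp (a : ℝ) : exp a ≤ 1 + a * exp a := by
  have h : (1 - a) * exp a ≤ exp (-a) * exp a := by gcongr; exact one_sub_le_exp_neg a
  rw [← exp_add, neg_add_cancel, exp_zero] at h
  linarith

lemma expWeight_le_exp_add (γ : ℝ) (m : ℝ → ℝ) (x : ℝ) :
    expWeight γ m x ≤ exp (γ * x) + m x * expWeight γ m x :=
  calc expWeight γ m x = exp (γ * x) * exp (m x) := exp_add _ _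
    _ ≤ exp (γ * x) * (1 + m x * exp (m x)) := by gcongr; exact exp_le_one_add_mul_exp _
    _ = exp (γ * x) + m x * expWeight γ m x := by rw [expWeight, exp_add]; ring

lemma lintegral_expWeight_le_phi_add (F : Measure ℝ) (γ : ℝ) (m : ℝ → ℝ) :
    ∫⁻ x, ENNReal.ofReal (expWeight γ m x) ∂F ≤
      phi F γ + ∫⁻ x, ENNReal.ofReal (m x * expWeight γ m x) ∂F := by
  rw [phi, ← lintegral_add_left (by fun_prop)]
  exact lintegral_mono fun x =>
    (ENNReal.ofReal_le_ofReal (expWeight_le_exp_add γ m x)).trans ENNReal.ofReal_add_le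

namespace IsSubaddExponent

lemma expWeight_add_le (hm : IsSubaddExponent m) (x y : ℝ) :
    expWeight γ m (x + y) ≤ expWeight γ m x * expWeight γ m y := by
  simp only [expWeight, ← exp_add]
  exact exp_le_exp.2 (by linarith [hm.map_add_le x y])

lemma mul_expWeight_nonneg (hm : IsSubaddExponent m) (x : ℝ) : 0 ≤ m x * expWeight γ m x :=
  mul_nonneg (hm.nonneg x) (expWeight_pos γ m x).le

lemma continuous_mul_expWeight (hm : IsSubaddExponent m) :
    Continuous fun x => m x * expWeight γ m x :=
  hm.continuous.mul (continuous_expWeight hm.continuous)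

lemma monotone_mul_expWeight (hm : IsSubaddExponent m) (hγ : 0 ≤ γ) :
    Monotone fun x => m x * expWeight γ m x :=
  hm.monotone.mul (monotone_expWeight hγ hm.monotone) hm.nonneg fun x => (expWeight_pos γ m x).le

lemma mul_expWeight_add_le (hm : IsSubaddExponent m) (x y : ℝ) :
    m (x + y) * expWeight γ m (x + y) ≤
      m x * expWeight γ m x * expWeight γ m y + expWeight γ m x * (m y * expWeight γ m y) :=
  calc m (x + y) * expWeight γ m (x + y)
      ≤ (m x + m y) * (expWeight γ m x * expWeight γ m y) :=
        mul_le_mul (hm.map_add_le x y) (hm.expWeight_add_le x y) (expWeight_pos _ _ _).le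
          (add_nonneg (hm.nonneg x) (hm.nonneg y))
    _ = m x * expWeight γ m x * expWeight γ m y + expWeight γ m x * (m y * expWeight γ m y) := by
        ring

lemma ofReal_mul_expWeight_add_le (hm : IsSubaddExponent m) (x y : ℝ) :
    ENNReal.ofReal (m (x + y) * expWeight γ m (x + y)) ≤
      ENNReal.ofReal (m x * expWeight γ m x) * ENNReal.ofReal (expWeight γ m y) +
        ENNReal.ofReal (expWeight γ m x) * ENNReal.ofReal (m y * expWeight γ m y) := by
  rw [← ENNReal.ofReal_mul (hm.mul_expWeight_nonneg x),
    ← ENNReal.ofReal_mul (expWeight_pos γ m x).le]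
  exact (ENNReal.ofReal_le_ofReal (hm.mul_expWeight_add_le x y)).trans ENNReal.ofReal_add_le

theorem const_mul_lintegral_mul_expWeight_le [SFinite F] (hm : IsSubaddExponent m) (hγ : 0 ≤ γ)
    {K : ℝ≥0∞} {x₀ : ℝ} (hK : ∀ x ≥ x₀, K * tail F x ≤ tail (mconv F F) x) :
    K * ∫⁻ x, ENNReal.ofReal (m x * expWeight γ m x) ∂F ≤
      2 * (∫⁻ x, ENNReal.ofReal (expWeight γ m x) ∂F) *
          (∫⁻ x, ENNReal.ofReal (m x * expWeight γ m x) ∂F) +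
        K * (ENNReal.ofReal (m x₀ * expWeight γ m x₀) * F univ) := by
  have hmeas := hm.continuous_mul_expWeight (γ := γ).measurable.ennreal_ofReal
  refine (const_mul_lintegral_le_of_tail_le hK hm.mul_expWeight_nonneg
    hm.continuous_mul_expWeight.lowerSemicontinuous (hm.monotone_mul_expWeight hγ)).trans ?_
  gcongr
  exact lintegral_mconv_le_of_map_add_le hmeas (measurable_ofReal_expWeight hm.continuous)
    hm.ofReal_mul_expWeight_add_le

end IsSubaddExponent

lemma lintegral_mul_expWeight_ne_top {b : ℝ} (hb : ∀ x, m x ≤ b)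
    (hfin : ∫⁻ x, ENNReal.ofReal (expWeight γ m x) ∂F ≠ ⊤) :
    ∫⁻ x, ENNReal.ofReal (m x * expWeight γ m x) ∂F ≠ ⊤ := by
  refine ne_top_of_le_ne_top (ENNReal.mul_ne_top ENNReal.ofReal_ne_top hfin)
    (b := ENNReal.ofReal b * ∫⁻ x, ENNReal.ofReal (expWeight γ m x) ∂F) ?_
  rw [← lintegral_const_mul' _ _ ENNReal.ofReal_ne_top]
  refine lintegral_mono fun x => ?_
  rw [← ENNReal.ofReal_mul' (expWeight_pos γ m x).le]
  gcongr
  · exact (expWeight_pos γ m x).le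
  · exact hb x

end ExpWeight

section Ramp

/-- The truncated linear exponent `min (η x⁺) b`. With it `expWeight γ` interpolates between
`e ^ (γ x)` at `b = 0` and `e ^ ((γ + η) x)` as `b → ∞`, for `x ≥ 0`. -/
def ramp (η b x : ℝ) : ℝ := min (η * max x 0) b

variable {F : Measure ℝ} {γ η b : ℝ}

lemma min_add_le_min_add_min {u v c : ℝ} (hu : 0 ≤ u) (hv : 0 ≤ v) (hc : 0 ≤ c) :
    min (u + v) c ≤ min u c + min v c := by
  grind

lemma ramp_le (η b x : ℝ) : ramp η b x ≤ b := min_le_right _ _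

lemma continuous_ramp (η b : ℝ) : Continuous (ramp η b) := by
  unfold ramp
  fun_prop

lemma isSubaddExponent_ramp (hη : 0 ≤ η) (hb : 0 ≤ b) : IsSubaddExponent (ramp η b) where
  nonneg x := le_min (by positivity) hb
  monotone x y h := by unfold ramp; gcongr
  continuous := continuous_ramp η b
  map_add_le x y := by
    have hpos : max (x + y) 0 ≤ max x 0 + max y 0 := by grind
    refine le_trans ?_ (min_add_le_min_add_min (by positivity) (by positivity) hb)
    unfold ramp
    rw [← mul_add]
    gcongr

lemma ramp_mul_expWeight_le (hη : 0 ≤ η) (hη₁ : η ≤ 1) {x : ℝ} (hx : 0 ≤ x) :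
    ramp η b x * expWeight γ (ramp η b) x ≤ η * (x * exp ((γ + 1) * x)) := by
  have hramp : ramp η b x ≤ η * x := by
    rw [ramp, max_eq_left hx]
    exact min_le_left _ _
  have hexp : expWeight γ (ramp η b) x ≤ exp ((γ + 1) * x) :=
    exp_le_exp.2 (by nlinarith)
  calc ramp η b x * expWeight γ (ramp η b) x ≤ η * x * exp ((γ + 1) * x) :=
        mul_le_mul hramp hexp (expWeight_pos _ _ _).le (by positivity)
    _ = η * (x * exp ((γ + 1) * x)) := mul_assoc _ _ _

lemma expWeight_ramp_zero_le (γ η x : ℝ) : expWeight γ (ramp η 0) x ≤ exp (γ * x) :=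
  exp_le_exp.2 (by linarith [ramp_le η 0 x])

lemma lintegral_expWeight_ramp_zero_le (F : Measure ℝ) (γ η : ℝ) :
    ∫⁻ x, ENNReal.ofReal (expWeight γ (ramp η 0) x) ∂F ≤ phi F γ :=
  lintegral_mono fun x => ENNReal.ofReal_le_ofReal (expWeight_ramp_zero_le γ η x)

lemma continuous_lintegral_expWeight_ramp (hfin : phi F γ ≠ ⊤) (η : ℝ) :
    Continuous fun b => ∫⁻ x, ENNReal.ofReal (expWeight γ (ramp η b) x) ∂F := by
  refine continuous_iff_continuousAt.2 fun b₀ => ?_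
  refine tendsto_lintegral_filter_of_dominated_convergence
    (fun x => ENNReal.ofReal (exp (b₀ + 1)) * ENNReal.ofReal (exp (γ * x)))
    (.of_forall fun b => measurable_ofReal_expWeight (continuous_ramp η b)) ?_ ?_ ?_
  · filter_upwards [eventually_le_nhds (lt_add_one b₀)] with b hb
    refine .of_forall fun x => ?_
    rw [← ENNReal.ofReal_mul (exp_pos _).le, ← exp_add]
    refine ENNReal.ofReal_le_ofReal (exp_le_exp.2 ?_)
    linarith [ramp_le η b x]
  · rw [lintegral_const_mul _ (by fun_prop)]
    exact ENNReal.mul_ne_top ENNReal.ofReal_ne_top hfin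
  · refine .of_forall fun x => (ENNReal.continuous_ofReal.comp ?_).tendsto b₀
    unfold expWeight ramp
    fun_prop

lemma phi_add_le_liminf_lintegral_expWeight_ramp (F : Measure ℝ) (γ : ℝ) (hη : 0 ≤ η) :
    phi F (γ + η) ≤
      liminf (fun b => ∫⁻ x, ENNReal.ofReal (expWeight γ (ramp η b) x) ∂F) atTop := by
  refine le_trans (lintegral_mono fun x => ?_)
    (lintegral_liminf_le fun b => measurable_ofReal_expWeight (continuous_ramp η b))
  refine le_liminf_of_le (by isBoundedDefault) ?_
  filter_upwards [eventually_ge_atTop (η * max x 0)] with b hb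
  rw [expWeight, ramp, min_eq_left hb, add_mul]
  gcongr
  exact le_max_left x 0

theorem exists_lintegral_expWeight_ramp_eq (hη : 0 ≤ η) (htop : phi F (γ + η) = ⊤) {q : ℝ≥0∞}
    (hq : phi F γ ≤ q) (hq_top : q ≠ ⊤) :
    ∃ b, 0 ≤ b ∧ ∫⁻ x, ENNReal.ofReal (expWeight γ (ramp η b) x) ∂F = q := by
  have hliminf : q < liminf (fun b => ∫⁻ x, ENNReal.ofReal (expWeight γ (ramp η b) x) ∂F) atTop :=
    (htop ▸ hq_top.lt_top).trans_le (phi_add_le_liminf_lintegral_expWeight_ramp F γ hη)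
  obtain ⟨N, hqN, hN⟩ :=
    ((eventually_lt_of_lt_liminf hliminf).and (eventually_ge_atTop 0)).exists
  obtain ⟨b, hb, hbq⟩ := intermediate_value_Icc hN
    (continuous_lintegral_expWeight_ramp (ne_top_of_le_ne_top hq_top hq) η).continuousOn
    ⟨(lintegral_expWeight_ramp_zero_le F γ η).trans hq, hqN.le⟩
  exact ⟨b, hb.1, hbq⟩

end Ramp

section UpperBound

variable {F : Measure ℝ} {γ : ℝ}

lemma le_div_tsub_of_mul_le_mul_add {a c J A : ℝ≥0∞} (hac : a < c) (hc : c ≠ ⊤) (hJ : J ≠ ⊤)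
    (h : c * J ≤ a * J + A) : J ≤ A / (c - a) := by
  rw [ENNReal.le_div_iff_mul_le (.inl (tsub_pos_of_lt hac).ne') (.inl (ENNReal.sub_ne_top hc)),
    mul_comm, ENNReal.sub_mul fun _ _ => hJ, tsub_le_iff_left]
  exact h

lemma le_phi_add_of_tail_le [SFinite F] (hγ : 0 ≤ γ) {η : ℝ} (hη : 0 ≤ η) (hη₁ : η ≤ 1)
    (htop : phi F (γ + η) = ⊤) {K q : ℝ≥0∞} (hK_top : K ≠ ⊤) {x₀ : ℝ} (hx₀ : 0 ≤ x₀)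
    (hK : ∀ x ≥ x₀, K * tail F x ≤ tail (mconv F F) x) (hq : phi F γ ≤ q) (hqK : 2 * q < K) :
    q ≤ phi F γ + ENNReal.ofReal η *
      (K * (ENNReal.ofReal (x₀ * exp ((γ + 1) * x₀)) * F univ) / (K - 2 * q)) := by
  have hq_top : q ≠ ⊤ := by rintro rfl; simp at hqK
  obtain ⟨b, hb, hbq⟩ := exists_lintegral_expWeight_ramp_eq hη htop hq hq_top
  have hm := isSubaddExponent_ramp hη hb
  set J := ∫⁻ x, ENNReal.ofReal (ramp η b x * expWeight γ (ramp η b) x) ∂F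
  have hJ_top : J ≠ ⊤ :=
    lintegral_mul_expWeight_ne_top (ramp_le η b) (hbq ▸ hq_top)
  have hKJ : K * J ≤ 2 * q * J +
      ENNReal.ofReal η * (K * (ENNReal.ofReal (x₀ * exp ((γ + 1) * x₀)) * F univ)) :=
    calc K * J
        ≤ 2 * q * J + K * (ENNReal.ofReal (ramp η b x₀ * expWeight γ (ramp η b) x₀) * F univ) :=
          hbq ▸ hm.const_mul_lintegral_mul_expWeight_le hγ hK
      _ ≤ 2 * q * J + K * (ENNReal.ofReal (η * (x₀ * exp ((γ + 1) * x₀))) * F univ) := by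
          gcongr _ + K * (?_ * _)
          exact ENNReal.ofReal_le_ofReal (ramp_mul_expWeight_le hη hη₁ hx₀)
      _ = _ := by rw [ENNReal.ofReal_mul hη]; ring
  calc q ≤ phi F γ + J := hbq ▸ lintegral_expWeight_le_phi_add F γ (ramp η b)
    _ ≤ _ := by
        rw [← mul_div_assoc]
        gcongr
        exact le_div_tsub_of_mul_le_mul_add hqK hK_top hJ_top hKJ

theorem le_two_mul_phi_of_tail_le [IsFiniteMeasure F] (hγ : 0 ≤ γ)
    (htop : ∀ η > 0, phi F (γ + η) = ⊤) {K : ℝ≥0∞} (hK_top : K ≠ ⊤)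
    (hK : ∀ᶠ x in atTop, K * tail F x ≤ tail (mconv F F) x) : K ≤ 2 * phi F γ := by
  by_contra! hlt
  obtain ⟨q, hφq, hqK⟩ : ∃ q, phi F γ < q ∧ q < K / 2 :=
    exists_between (by
      rwa [ENNReal.lt_div_iff_mul_lt (.inl two_ne_zero) (.inl ENNReal.ofNat_ne_top), mul_comm])
  rw [ENNReal.lt_div_iff_mul_lt (.inl two_ne_zero) (.inl ENNReal.ofNat_ne_top), mul_comm] at hqK
  obtain ⟨x₀, hx₀⟩ := eventually_atTop.1 (hK.and (eventually_ge_atTop 0))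
  set C := K * (ENNReal.ofReal (x₀ * exp ((γ + 1) * x₀)) * F univ) / (K - 2 * q)
  have hC : C ≠ ⊤ := ENNReal.div_ne_top
    (ENNReal.mul_ne_top hK_top (ENNReal.mul_ne_top ENNReal.ofReal_ne_top (measure_ne_top F _)))
    (tsub_pos_of_lt hqK).ne'
  have hbound : ∀ᶠ η in 𝓝[>] (0 : ℝ), q ≤ phi F γ + ENNReal.ofReal η * C := by
    filter_upwards [Ioc_mem_nhdsGT (zero_lt_one' ℝ)] with η hη
    exact le_phi_add_of_tail_le hγ hη.1.le hη.2 (htop η hη.1) hK_top (hx₀ x₀ le_rfl).2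
      (fun x hx => (hx₀ x hx).1) hφq.le hqK
  have hlim : Tendsto (fun η => phi F γ + ENNReal.ofReal η * C) (𝓝[>] 0) (𝓝 (phi F γ)) := by
    have hmul : Tendsto (fun η => ENNReal.ofReal η * C) (𝓝 0) (𝓝 0) := by
      simpa using ENNReal.Tendsto.mul_const (ENNReal.continuous_ofReal.tendsto 0) (.inr hC)
    simpa using (tendsto_const_nhds.add hmul).mono_left nhdsWithin_le_nhds
  exact hφq.not_ge (ge_of_tendsto hlim hbound)

theorem liminf_tail_mconv_div_le_two_mul_phi [IsFiniteMeasure F] (hub : ∀ x, tail F x ≠ 0)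
    (hγ : 0 ≤ γ) (htop : ∀ η > 0, phi F (γ + η) = ⊤) :
    liminf (fun x => tail (mconv F F) x / tail F x) atTop ≤ 2 * phi F γ := by
  refine le_of_forall_lt_imp_le_of_dense fun K hK => ?_
  refine le_two_mul_phi_of_tail_le hγ htop hK.ne_top ?_
  filter_upwards [eventually_lt_of_lt_liminf hK] with x hx
  exact (ENNReal.le_div_iff_mul_le (.inl (hub x)) (.inl (measure_ne_top F _))).1 hx.le

lemma phi_eq_top_of_gammaHat_lt (h : gammaHat F < ENNReal.ofReal γ) : phi F γ = ⊤ := by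
  by_contra hne
  exact h.not_ge (le_sSup ⟨γ, rfl, Ne.lt_top hne⟩)

lemma phi_le_phiHat (hγ : ENNReal.ofReal γ < gammaHat F ∨ γ < 0) : phi F γ ≤ phiHat F :=
  le_iSup₂ (f := fun γ (_ : ENNReal.ofReal γ < gammaHat F ∨ γ < 0) => phi F γ) γ hγ

lemma phi_le_liminf_phi (F : Measure ℝ) (γ : ℝ) : phi F γ ≤ liminf (phi F) (𝓝[<] γ) := by
  have hlim : ∀ x : ℝ, liminf (fun a => ENNReal.ofReal (exp (a * x))) (𝓝[<] γ)
      = ENNReal.ofReal (exp (γ * x)) := fun x =>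
    (((ENNReal.continuous_ofReal.comp (by fun_prop : Continuous fun a : ℝ => exp (a * x))).tendsto
      γ).mono_left nhdsWithin_le_nhds).liminf_eq
  simp_rw [phi, ← hlim]
  exact lintegral_liminf_le fun a => by fun_prop

lemma phi_toReal_gammaHat_le_phiHat (hfin : gammaHat F ≠ ⊤) :
    phi F (gammaHat F).toReal ≤ phiHat F := by
  refine (phi_le_liminf_phi F _).trans (liminf_le_of_frequently_le' (Eventually.frequently ?_))
  filter_upwards [self_mem_nhdsWithin] with γ hγ
  refine phi_le_phiHat ((lt_or_ge γ 0).symm.imp_left fun h => ?_)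
  exact (ENNReal.ofReal_lt_iff_lt_toReal h hfin).2 hγ

lemma ofReal_exp_mul_tail_le_phi (F : Measure ℝ) (hγ : 0 ≤ γ) (x : ℝ) :
    ENNReal.ofReal (exp (γ * x)) * tail F x ≤ phi F γ := by
  rw [tail, ← setLIntegral_const]
  refine (setLIntegral_mono' measurableSet_Ioi fun y hy => ?_).trans
    (setLIntegral_le_lintegral (Ioi x) _)
  have hxy : x ≤ y := le_of_lt hy
  gcongr

lemma phiHat_eq_top_of_gammaHat_eq_top (hF : ∃ x > 0, tail F x ≠ 0) (htop : gammaHat F = ⊤) :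
    phiHat F = ⊤ := by
  obtain ⟨x, hx, hFx⟩ := hF
  have hexp : Tendsto (fun γ : ℝ => ENNReal.ofReal (exp (γ * x))) atTop (𝓝 ⊤) :=
    ENNReal.tendsto_ofReal_atTop.comp
      (tendsto_exp_atTop.comp (tendsto_id.atTop_mul_const hx))
  have hlim : Tendsto (fun γ : ℝ => ENNReal.ofReal (exp (γ * x)) * tail F x) atTop (𝓝 ⊤) := by
    simpa only [ENNReal.top_mul hFx] using
      ENNReal.Tendsto.mul_const (b := tail F x) hexp (.inl ENNReal.top_ne_zero)
  refine top_le_iff.1 (le_of_tendsto hlim ?_)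
  filter_upwards [eventually_ge_atTop 0] with γ hγ
  exact (ofReal_exp_mul_tail_le_phi F hγ x).trans (phi_le_phiHat (.inl (by simp [htop])))

theorem liminf_tail_mconv_div_le_two_mul_phiHat [IsFiniteMeasure F] (hub : ∀ x, tail F x ≠ 0) :
    liminf (fun x => tail (mconv F F) x / tail F x) atTop ≤ 2 * phiHat F := by
  by_cases hfin : gammaHat F = ⊤
  · simp [phiHat_eq_top_of_gammaHat_eq_top ⟨1, one_pos, hub 1⟩ hfin]
  have htop : ∀ η > 0, phi F ((gammaHat F).toReal + η) = ⊤ := fun η hη =>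
    phi_eq_top_of_gammaHat_lt <| (ENNReal.lt_ofReal_iff_toReal_lt hfin).2 (lt_add_of_pos_right _ hη)
  refine (liminf_tail_mconv_div_le_two_mul_phi hub ENNReal.toReal_nonneg htop).trans ?_
  gcongr
  exact phi_toReal_gammaHat_le_phiHat hfin

end UpperBound

theorem stmt3_general (F : Measure ℝ) [IsFiniteMeasure F]
    (hsupp : F (Iio 0) = 0) (hub : ∀ x : ℝ, tail F x ≠ 0)
    (hins : ∀ y : ℝ, 0 < y →
      expGammaHat F y ≤ liminf (fun x : ℝ => tail F (x - y) / tail F x) atTop) :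
    liminf (fun x : ℝ => tail (mconv F F) x / tail F x) atTop = 2 * phiHat F :=
  le_antisymm (liminf_tail_mconv_div_le_two_mul_phiHat hub)
    (two_mul_phiHat_le_liminf hsupp hub hins)

/-- Theorem 2: if γ̂ > 0 and liminf F̄(x−y)/F̄(x) ≥ e^{γ̂y} for all y > 0,
then liminf (F*F)‾(x)/F̄(x) = 2φ(γ̂). -/
theorem stmt3 (F : MeasureTheory.Measure ℝ) [MeasureTheory.IsProbabilityMeasure F]
    (hsupp : F (Set.Iio 0) = 0) (hub : ∀ x : ℝ, tail F x ≠ 0)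
    (hγ : 0 < gammaHat F)
    (hins : ∀ y : ℝ, 0 < y →
      expGammaHat F y ≤ liminf (fun x : ℝ => tail F (x - y) / tail F x) atTop) :
    liminf (fun x : ℝ => tail (mconv F F) x / tail F x) atTop = 2 * phiHat F :=
  stmt3_general F hsupp hub hins
end
end

section
/- Let F be a distribution on [0,∞) with 0 < γ̂ < ∞ and φ(γ̂) < ∞. Then liminf_{x→∞} (F*F)‾(x)/F̄(x) ≤ 2φ(γ̂) and limsup_{x→∞} (F*F)‾(x)/F̄(x) ≥ 2φ(γ̂). -/
open MeasureTheory Filter Real Set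
open scoped ENNReal Topology

noncomputable section

/-! The exponential tilt `G(dx) = e^{γ̂x} F(dx)` has finite mass `φ(γ̂)`, is heavy-tailed, commutes
with convolution, and inherits from `F` every eventual inequality `c F̄ ≤ (F*F)‾` or
`(F*F)‾ ≤ c F̄`. So it suffices to compare `c` with `2 G(ℝ)` for a finite heavy-tailed measure `G`
on `[0,∞)`, which is done by integrating monotone functions against `G` and `G * G`.

For the upper bound on `c`, take `x e^{δx}` with `x` replaced by the subadditive `u = min(x, T)`:
then `∫ u e^{δu} d(G * G) ≤ 2 ∫ u e^{δu} dG ∫ e^{δu} dG`, and heavy-tailedness allows a choice of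
`δ` and `T` that keeps `∫ e^{δu} dG` close to `G(ℝ)` while `∫ u e^{δu} dG` is as large as desired.
For the lower bound, any monotone `f` satisfies
`2 G(-∞, A] ∫_{(A, ∞)} f dG ≤ ∫ f d(G * G)`, and `f = e^{min(x, T)}` has an arbitrarily large
integral. -/

section Growth

lemma le_of_forall_exists_mul_le_add_mul {a b K : ℝ≥0∞} (hK : K ≠ ⊤)
    (h : ∀ N : ℝ≥0∞, N ≠ ⊤ → ∃ J, N ≤ J ∧ J ≠ ⊤ ∧ a * J ≤ K + b * J) : a ≤ b := by
  refine ENNReal.le_of_forall_pos_le_add fun ε hε _ => ?_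
  have hε₀ : (ε : ℝ≥0∞) ≠ 0 := by exact_mod_cast hε.ne'
  obtain ⟨J, hNJ, hJ_top, hJ⟩ := h (K / ε + 1) (by finiteness)
  have hJ₀ : J ≠ 0 := (zero_lt_one.trans_le (le_add_self.trans hNJ)).ne'
  have hKJ : K ≤ ε * J := by
    rw [← ENNReal.div_le_iff' hε₀ ENNReal.coe_ne_top]
    exact le_self_add.trans hNJ
  rw [← ENNReal.mul_le_mul_iff_left hJ₀ hJ_top, add_mul, add_comm]
  exact hJ.trans (by gcongr)

end Growth

section UpperSet

variable {α : Type*} [ConditionallyCompleteLinearOrder α] [DenselyOrdered α] [NoMinOrder α]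
  [TopologicalSpace α] [OrderTopology α]

lemma eq_Ioi_csInf_of_isOpen_of_isUpperSet {S : Set α} (ho : IsOpen S) (hu : IsUpperSet S)
    (hne : S.Nonempty) (hb : BddBelow S) : S = Ioi (sInf S) := by
  refine Subset.antisymm (fun z hz => ?_) fun z hz => ?_
  · obtain ⟨w, hwz, hw⟩ := ((frequently_lt_nhds z).and_eventually (ho.mem_nhds hz)).exists
    exact (csInf_le hb hw).trans_lt hwz
  · obtain ⟨w, hw, hwz⟩ := exists_lt_of_csInf_lt hne hz
    exact hu hwz.le hw

end UpperSet

section Tail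

variable {μ ν : Measure ℝ} {x₀ : ℝ}

lemma setLIntegral_Ioi_le_of_tail_le (h : ∀ x, x₀ ≤ x → tail μ x ≤ tail ν x) {f : ℝ → ℝ≥0∞}
    (hmono : Monotone f) (hcont : Continuous f) (hfin : ∀ x, f x ≠ ⊤) :
    ∫⁻ x in Ioi x₀, f x ∂μ ≤ ∫⁻ x in Ioi x₀, f x ∂ν := by
  have hcont' : Continuous fun x => (f x).toReal :=
    ENNReal.continuousOn_toReal.comp_continuous hcont hfin
  have layercake (ρ : Measure ℝ) : ∫⁻ x in Ioi x₀, f x ∂ρ =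
      ∫⁻ t in Ioi 0, ρ ({x | t < (f x).toReal} ∩ Ioi x₀) := by
    simp_rw [← Measure.restrict_apply (isOpen_lt continuous_const hcont').measurableSet]
    rw [← lintegral_eq_lintegral_meas_lt _ (ae_of_all _ fun _ => ENNReal.toReal_nonneg)
      hcont'.aemeasurable]
    simp only [ENNReal.ofReal_toReal (hfin _)]
  rw [layercake μ, layercake ν]
  refine lintegral_mono fun t => ?_
  set S := {x | t < (f x).toReal} ∩ Ioi x₀
  have hS_open : IsOpen S := (isOpen_lt continuous_const hcont').inter isOpen_Ioi
  have hS_upper : IsUpperSet S := fun x y hxy hx =>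
    ⟨hx.1.trans_le (ENNReal.toReal_mono (hfin y) (hmono hxy)), hx.2.trans_le hxy⟩
  have hS_lower : x₀ ∈ lowerBounds S := fun x hx => hx.2.le
  rcases S.eq_empty_or_nonempty with hS | hS
  · simp [hS]
  · rw [eq_Ioi_csInf_of_isOpen_of_isUpperSet hS_open hS_upper hS ⟨x₀, hS_lower⟩]
    exact h _ (le_csInf hS hS_lower)

lemma lintegral_le_mul_add_setLIntegral_Ioi {f : ℝ → ℝ≥0∞} {C : ℝ≥0∞} (h : ∀ x ≤ x₀, f x ≤ C) :
    ∫⁻ x, f x ∂μ ≤ C * μ univ + ∫⁻ x in Ioi x₀, f x ∂μ := by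
  rw [← lintegral_add_compl f (measurableSet_Iic (a := x₀)), compl_Iic]
  gcongr
  calc ∫⁻ x in Iic x₀, f x ∂μ ≤ ∫⁻ _ in Iic x₀, C ∂μ := setLIntegral_mono measurable_const h
    _ = C * μ (Iic x₀) := setLIntegral_const _ _
    _ ≤ C * μ univ := by gcongr; exact subset_univ _

end Tail

section Convolution

variable {μ ν : Measure ℝ}

instance isFiniteMeasure_mconv [IsFiniteMeasure μ] [IsFiniteMeasure ν] :
    IsFiniteMeasure (mconv μ ν) :=
  inferInstanceAs (IsFiniteMeasure (μ ∗ ν))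

lemma lintegral_mconv [SFinite ν] {f : ℝ → ℝ≥0∞} (hf : Measurable f) :
    ∫⁻ z, f z ∂(mconv μ ν) = ∫⁻ x, ∫⁻ y, f (x + y) ∂ν ∂μ :=
  Measure.lintegral_conv hf

lemma lintegral_lintegral_mul_add_mul {α : Type*} [MeasurableSpace α] {μ : Measure α}
    {f g : α → ℝ≥0∞} (hf : Measurable f) (hg : Measurable g) :
    ∫⁻ x, ∫⁻ y, (f x * g y + g x * f y) ∂μ ∂μ = 2 * ((∫⁻ x, f x ∂μ) * ∫⁻ x, g x ∂μ) := by
  have inner (x : α) : ∫⁻ y, (f x * g y + g x * f y) ∂μ =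
      f x * ∫⁻ y, g y ∂μ + g x * ∫⁻ y, f y ∂μ := by
    rw [lintegral_add_left (by fun_prop), lintegral_const_mul _ hg, lintegral_const_mul _ hf]
  simp_rw [inner]
  rw [lintegral_add_left (by fun_prop), lintegral_mul_const _ hf, lintegral_mul_const _ hg]
  ring

variable [SFinite μ]

lemma lintegral_mconv_self_le_two_mul (hμ : ∀ᵐ x ∂μ, 0 ≤ x) {f w : ℝ → ℝ≥0∞}
    (hf : Measurable f) (hw : Measurable w)
    (h : ∀ x y, 0 ≤ x → 0 ≤ y → f (x + y) ≤ f x * w y + w x * f y) :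
    ∫⁻ z, f z ∂(mconv μ μ) ≤ 2 * ((∫⁻ x, f x ∂μ) * ∫⁻ x, w x ∂μ) := by
  rw [lintegral_mconv hf, ← lintegral_lintegral_mul_add_mul hf hw]
  refine lintegral_mono_ae (hμ.mono fun x hx => lintegral_mono_ae (hμ.mono fun y hy => ?_))
  exact h x y hx hy

lemma two_mul_setLIntegral_Ioi_mul_le_lintegral_mconv_self (hμ : ∀ᵐ x ∂μ, 0 ≤ x)
    {f : ℝ → ℝ≥0∞} (hf : Monotone f) (A : ℝ) :
    2 * ((∫⁻ x in Ioi A, f x ∂μ) * μ (Iic A)) ≤ ∫⁻ z, f z ∂(mconv μ μ) := by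
  rw [← lintegral_indicator measurableSet_Ioi, ← lintegral_indicator_one measurableSet_Iic,
    ← lintegral_lintegral_mul_add_mul (hf.measurable.indicator measurableSet_Ioi)
      (measurable_one.indicator measurableSet_Iic), lintegral_mconv hf.measurable]
  refine lintegral_mono_ae (hμ.mono fun x hx => lintegral_mono_ae (hμ.mono fun y hy => ?_))
  have hfx : f x ≤ f (x + y) := hf (le_add_of_nonneg_right hy)
  have hfy : f y ≤ f (x + y) := hf (le_add_of_nonneg_left hx)
  rcases le_or_gt x A with hxA | hxA <;> rcases le_or_gt y A with hyA | hyA <;>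
    simp [indicator, hxA, hyA, not_lt_of_ge, not_le_of_gt, hfx, hfy]

end Convolution

section Tilt

/-- The exponential tilt `e^{γx} μ(dx)`, not normalized to a probability measure. -/
def expTilt (μ : Measure ℝ) (γ : ℝ) : Measure ℝ :=
  μ.withDensity fun x => ENNReal.ofReal (exp (γ * x))

variable {μ ν : Measure ℝ} {γ : ℝ}

lemma lintegral_expTilt {f : ℝ → ℝ≥0∞} (hf : Measurable f) :
    ∫⁻ x, f x ∂(expTilt μ γ) = ∫⁻ x, ENNReal.ofReal (exp (γ * x)) * f x ∂μ :=
  lintegral_withDensity_eq_lintegral_mul μ (by fun_prop) hf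

lemma expTilt_univ : expTilt μ γ univ = phi μ γ := by
  rw [expTilt, withDensity_apply _ .univ, setLIntegral_univ, phi]

lemma isFiniteMeasure_expTilt (h : phi μ γ < ⊤) : IsFiniteMeasure (expTilt μ γ) :=
  ⟨expTilt_univ.trans_lt h⟩

lemma ae_expTilt_of_ae {p : ℝ → Prop} (h : ∀ᵐ x ∂μ, p x) : ∀ᵐ x ∂(expTilt μ γ), p x :=
  (withDensity_absolutelyContinuous μ _).ae_le h

lemma phi_expTilt (δ : ℝ) : phi (expTilt μ γ) δ = phi μ (γ + δ) := by
  rw [phi, lintegral_expTilt (by fun_prop), phi]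
  simp_rw [← ENNReal.ofReal_mul (exp_pos _).le, ← exp_add, ← add_mul]

lemma expTilt_smul (c : ℝ≥0∞) : expTilt (c • μ) γ = c • expTilt μ γ :=
  withDensity_smul_measure c _

lemma expTilt_mconv [SFinite ν] :
    expTilt (mconv μ ν) γ = mconv (expTilt μ γ) (expTilt ν γ) := by
  have : SFinite (expTilt ν γ) := inferInstanceAs (SFinite (ν.withDensity _))
  refine Measure.ext_of_lintegral _ fun f hf => ?_
  rw [lintegral_expTilt hf, lintegral_mconv (by fun_prop), lintegral_mconv hf,
    lintegral_expTilt (by fun_prop)]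
  refine lintegral_congr fun x => ?_
  rw [lintegral_expTilt (by fun_prop), ← lintegral_const_mul _ (by fun_prop)]
  refine lintegral_congr fun y => ?_
  rw [mul_add, exp_add, ENNReal.ofReal_mul (exp_pos _).le, mul_assoc]

lemma eventually_tail_expTilt_le (hγ : 0 ≤ γ) (h : ∀ᶠ x in atTop, tail μ x ≤ tail ν x) :
    ∀ᶠ x in atTop, tail (expTilt μ γ) x ≤ tail (expTilt ν γ) x := by
  obtain ⟨x₀, hx₀⟩ := eventually_atTop.1 h
  filter_upwards [eventually_ge_atTop x₀] with y hy
  simp only [tail, expTilt, withDensity_apply _ measurableSet_Ioi]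
  refine setLIntegral_Ioi_le_of_tail_le (fun x hx => hx₀ x (hy.trans hx)) (fun x z hxz => ?_)
    (ENNReal.continuous_ofReal.comp (by fun_prop)) fun _ => ENNReal.ofReal_ne_top
  gcongr

lemma isHeavyTailed_expTilt_of_eq_gammaHat (hγ : 0 ≤ γ) (h : ENNReal.ofReal γ = gammaHat μ) :
    IsHeavyTailed (expTilt μ γ) := by
  intro δ hδ
  rw [phi_expTilt]
  by_contra hne
  have hle : ENNReal.ofReal (γ + δ) ≤ gammaHat μ := le_sSup ⟨γ + δ, rfl, lt_top_iff_ne_top.2 hne⟩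
  rw [← h, ENNReal.ofReal_le_ofReal_iff hγ] at hle
  linarith

end Tilt

section TruncatedExponential

lemma min_add_le_min_add_min_s10 {α : Type*} [AddCommGroup α] [LinearOrder α] [IsOrderedAddMonoid α]
    {a b c : α} (ha : 0 ≤ a) (hb : 0 ≤ b) (hc : 0 ≤ c) : min (a + b) c ≤ min a c + min b c := by
  grind

/-- The exponential `e^{δx}` truncated at `x = T`. Truncating in the exponent keeps the function
submultiplicative on `[0,∞)`. -/
def truncExp (δ T x : ℝ) : ℝ≥0∞ := ENNReal.ofReal (exp (δ * min x T))

/-- The function `x e^{δx}` truncated at `x = T`, with value `0` for `x ≤ 0`. -/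
def truncMulExp (δ T x : ℝ) : ℝ≥0∞ := ENNReal.ofReal (min x T) * truncExp δ T x

variable {δ T x y : ℝ}

lemma continuous_truncExp (δ T : ℝ) : Continuous (truncExp δ T) :=
  ENNReal.continuous_ofReal.comp (by fun_prop)

lemma monotone_truncExp (hδ : 0 ≤ δ) (T : ℝ) : Monotone (truncExp δ T) := by
  intro x y hxy
  unfold truncExp
  gcongr

lemma monotone_truncExp_right (hδ : 0 ≤ δ) (x : ℝ) : Monotone fun T => truncExp δ T x := by
  intro S T hST
  exact ENNReal.ofReal_le_ofReal
    (exp_le_exp.2 (mul_le_mul_of_nonneg_left (min_le_min_left x hST) hδ))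

lemma truncExp_ne_top : truncExp δ T x ≠ ⊤ := ENNReal.ofReal_ne_top

lemma truncExp_le_of_le_left (hδ : 0 ≤ δ) (hxy : x ≤ y) :
    truncExp δ T x ≤ ENNReal.ofReal (exp (δ * y)) := by
  unfold truncExp
  gcongr
  exact (min_le_left x T).trans hxy

lemma truncExp_le_of_le_right (hδ : 0 ≤ δ) (hTy : T ≤ y) :
    truncExp δ T x ≤ ENNReal.ofReal (exp (δ * y)) := by
  unfold truncExp
  gcongr
  exact (min_le_right x T).trans hTy

lemma truncExp_add_le_mul (hδ : 0 ≤ δ) (hT : 0 ≤ T) (hx : 0 ≤ x) (hy : 0 ≤ y) :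
    truncExp δ T (x + y) ≤ truncExp δ T x * truncExp δ T y := by
  unfold truncExp
  rw [← ENNReal.ofReal_mul (exp_pos _).le, ← exp_add, ← mul_add]
  gcongr
  exact min_add_le_min_add_min_s10 hx hy hT

lemma continuous_truncMulExp (δ T : ℝ) : Continuous (truncMulExp δ T) :=
  Continuous.ennreal_mul (ENNReal.continuous_ofReal.comp (by fun_prop)) (continuous_truncExp δ T)
    (fun _ => .inr truncExp_ne_top) (fun _ => .inr ENNReal.ofReal_ne_top)

lemma monotone_truncMulExp (hδ : 0 ≤ δ) (T : ℝ) : Monotone (truncMulExp δ T) := by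
  intro x y hxy
  unfold truncMulExp
  gcongr
  exact monotone_truncExp hδ T hxy

lemma truncMulExp_ne_top : truncMulExp δ T x ≠ ⊤ :=
  ENNReal.mul_ne_top ENNReal.ofReal_ne_top truncExp_ne_top

lemma truncMulExp_le_mul_truncExp : truncMulExp δ T x ≤ ENNReal.ofReal T * truncExp δ T x := by
  unfold truncMulExp
  gcongr
  exact min_le_right x T

lemma truncMulExp_le_of_le (hδ : 0 ≤ δ) (hδ₁ : δ ≤ 1) (hxy : x ≤ y) :
    truncMulExp δ T x ≤ ENNReal.ofReal y * ENNReal.ofReal (exp y) := by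
  rcases le_or_gt y 0 with hy | hy
  · have : min x T ≤ 0 := (min_le_left x T).trans (hxy.trans hy)
    simp [truncMulExp, ENNReal.ofReal_of_nonpos this]
  · have hδy : truncExp δ T x ≤ ENNReal.ofReal (exp y) :=
      (truncExp_le_of_le_left hδ hxy).trans (by gcongr; exact mul_le_of_le_one_left hy.le hδ₁)
    unfold truncMulExp
    gcongr
    exact (min_le_left x T).trans hxy

lemma truncMulExp_add_le (hδ : 0 ≤ δ) (hT : 0 ≤ T) (hx : 0 ≤ x) (hy : 0 ≤ y) :
    truncMulExp δ T (x + y) ≤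
      truncMulExp δ T x * truncExp δ T y + truncExp δ T x * truncMulExp δ T y := by
  have hmin : ENNReal.ofReal (min (x + y) T) ≤
      ENNReal.ofReal (min x T) + ENNReal.ofReal (min y T) :=
    (ENNReal.ofReal_le_ofReal (min_add_le_min_add_min_s10 hx hy hT)).trans ENNReal.ofReal_add_le
  calc truncMulExp δ T (x + y)
      ≤ (ENNReal.ofReal (min x T) + ENNReal.ofReal (min y T)) *
          (truncExp δ T x * truncExp δ T y) := mul_le_mul' hmin (truncExp_add_le_mul hδ hT hx hy)
    _ = _ := by unfold truncMulExp; ring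

lemma mul_truncExp_le_mul_exp_add_truncMulExp (hδ : 0 ≤ δ) (M : ℝ) :
    ENNReal.ofReal M * truncExp δ T x ≤
      ENNReal.ofReal M * ENNReal.ofReal (exp (δ * M)) + truncMulExp δ T x := by
  rcases le_total (min x T) M with h | h
  · refine le_add_right ?_
    unfold truncExp
    gcongr
  · refine le_add_left ?_
    unfold truncMulExp
    gcongr

end TruncatedExponential

section HeavyTailed

lemma iSup_lintegral_truncExp (G : Measure ℝ) {δ : ℝ} (hδ : 0 ≤ δ) :
    ⨆ n : ℕ, ∫⁻ x, truncExp δ n x ∂G = phi G δ := by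
  rw [phi, ← lintegral_iSup (fun n => (continuous_truncExp δ n).measurable)
    fun m n hmn x => monotone_truncExp_right hδ x (Nat.cast_le.2 hmn)]
  refine lintegral_congr fun x => le_antisymm
    (iSup_le fun n => truncExp_le_of_le_left hδ le_rfl) ?_
  obtain ⟨n, hn⟩ := exists_nat_ge x
  exact le_iSup_of_le n (by rw [truncExp, min_eq_left hn])

variable {G : Measure ℝ} [IsFiniteMeasure G] {δ : ℝ}

lemma continuous_lintegral_truncExp (hδ : 0 ≤ δ) :
    Continuous fun T => ∫⁻ x, truncExp δ T x ∂G := by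
  refine continuous_iff_continuousAt.2 fun T₀ => ?_
  refine tendsto_lintegral_filter_of_dominated_convergence
    (fun _ => ENNReal.ofReal (exp (δ * (T₀ + 1))))
    (.of_forall fun T => (continuous_truncExp δ T).measurable) ?_
    (by rw [lintegral_const]; finiteness) (ae_of_all _ fun x => ?_)
  · filter_upwards [Iio_mem_nhds (lt_add_one T₀)] with T hT
    exact ae_of_all _ fun x => truncExp_le_of_le_right hδ (mem_Iio.1 hT).le
  · exact (ENNReal.continuous_ofReal.comp
      (by fun_prop : Continuous fun T => exp (δ * min x T))).tendsto T₀

lemma exists_lintegral_truncExp_eq (hG : IsHeavyTailed G) (hδ : 0 < δ) {b : ℝ≥0∞}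
    (hb : G univ ≤ b) (hb_top : b ≠ ⊤) : ∃ T, 0 ≤ T ∧ ∫⁻ x, truncExp δ T x ∂G = b := by
  have h₀ : ∫⁻ x, truncExp δ 0 x ∂G ≤ b :=
    calc ∫⁻ x, truncExp δ 0 x ∂G ≤ ∫⁻ _, 1 ∂G :=
          lintegral_mono fun x => (truncExp_le_of_le_right hδ.le le_rfl).trans (by simp)
      _ = G univ := lintegral_one
      _ ≤ b := hb
  obtain ⟨n, hn⟩ : ∃ n : ℕ, b < ∫⁻ x, truncExp δ n x ∂G := by
    rw [← lt_iSup_iff, iSup_lintegral_truncExp G hδ.le, hG δ hδ]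
    exact hb_top.lt_top
  obtain ⟨T, hT, hTb⟩ := intermediate_value_Icc n.cast_nonneg
    (continuous_lintegral_truncExp hδ.le).continuousOn ⟨h₀, hn.le⟩
  exact ⟨T, hT.1, hTb⟩

lemma exists_mul_exp_mul_lt {a b : ℝ≥0∞} (ha : a ≠ ⊤) (hab : a < b) (M : ℝ) :
    ∃ δ : ℝ, 0 < δ ∧ δ ≤ 1 ∧ a * ENNReal.ofReal (exp (δ * M)) < b := by
  have hlim : Tendsto (fun δ : ℝ => a * ENNReal.ofReal (exp (δ * M))) (𝓝[>] 0) (𝓝 a) := by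
    have hexp : Tendsto (fun δ : ℝ => ENNReal.ofReal (exp (δ * M))) (𝓝 0) (𝓝 1) := by
      simpa using ENNReal.tendsto_ofReal
        ((by fun_prop : Continuous fun δ : ℝ => exp (δ * M)).tendsto 0)
    simpa using (ENNReal.Tendsto.const_mul hexp (.inr ha)).mono_left nhdsWithin_le_nhds
  obtain ⟨δ, hδb, hδ⟩ := ((hlim.eventually (gt_mem_nhds hab)).and (Ioc_mem_nhdsGT one_pos)).exists
  exact ⟨δ, hδ.1, hδ.2, hδb⟩

lemma exists_lintegral_truncExp_eq_and_le_lintegral_truncMulExp (hG : IsHeavyTailed G)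
    {ε : ℝ≥0∞} (hε : ε ≠ 0) (hε_top : ε ≠ ⊤) {N : ℝ≥0∞} (hN : N ≠ ⊤) :
    ∃ δ T : ℝ, 0 ≤ δ ∧ δ ≤ 1 ∧ 0 ≤ T ∧ ∫⁻ x, truncExp δ T x ∂G = G univ + ε ∧
      N ≤ ∫⁻ x, truncMulExp δ T x ∂G := by
  have hε₂ : ε / 2 ≠ 0 := (ENNReal.half_pos hε).ne'
  set M : ℝ≥0∞ := N / (ε / 2)
  have hM_top : M ≠ ⊤ := ENNReal.div_ne_top hN hε₂
  obtain ⟨δ, hδ, hδ₁, hδM⟩ := exists_mul_exp_mul_lt (measure_ne_top G univ)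
    (ENNReal.lt_add_right (measure_ne_top G univ) hε₂) M.toReal
  obtain ⟨T, hT, hTε⟩ := exists_lintegral_truncExp_eq hG hδ (b := G univ + ε) le_self_add
    (by finiteness)
  refine ⟨δ, T, hδ.le, hδ₁, hT, hTε, ?_⟩
  have hsplit : M * (G univ + ε) ≤ M * (G univ + ε / 2) + ∫⁻ x, truncMulExp δ T x ∂G :=
    calc M * (G univ + ε) = ∫⁻ x, M * truncExp δ T x ∂G := by
          rw [lintegral_const_mul _ (continuous_truncExp δ T).measurable, hTε]
      _ ≤ ∫⁻ x, (M * ENNReal.ofReal (exp (δ * M.toReal)) + truncMulExp δ T x) ∂G :=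
          lintegral_mono fun x => by
            simpa only [ENNReal.ofReal_toReal hM_top] using
              mul_truncExp_le_mul_exp_add_truncMulExp hδ.le M.toReal
      _ = M * (G univ * ENNReal.ofReal (exp (δ * M.toReal))) + ∫⁻ x, truncMulExp δ T x ∂G := by
          rw [lintegral_add_left measurable_const, lintegral_const]; ring
      _ ≤ _ := by gcongr
  have hMε : M * (ε / 2) = N := ENNReal.div_mul_cancel hε₂ (by finiteness)
  refine ENNReal.le_of_add_le_add_left (a := M * (G univ + ε / 2)) (by finiteness) ?_
  calc M * (G univ + ε / 2) + N = M * (G univ + ε) := by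
        rw [← hMε, ← mul_add, add_assoc, ENNReal.add_halves]
    _ ≤ _ := hsplit

theorem le_two_mul_measure_univ_of_eventually_mul_tail_le (hG : IsHeavyTailed G)
    (hG₀ : ∀ᵐ x ∂G, 0 ≤ x) {c : ℝ≥0∞} (hc : c ≠ ⊤)
    (h : ∀ᶠ x in atTop, tail (c • G) x ≤ tail (mconv G G) x) : c ≤ 2 * G univ := by
  obtain ⟨x₀, hx₀⟩ := eventually_atTop.1 h
  refine ENNReal.le_of_forall_pos_le_add fun ε hε _ => ?_
  have hε₂ : (ε / 2 : ℝ≥0∞) ≠ 0 := (ENNReal.half_pos (by exact_mod_cast hε.ne')).ne'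
  rw [show 2 * G univ + ε = 2 * (G univ + ε / 2) by
    rw [mul_add, ENNReal.mul_div_cancel two_ne_zero ENNReal.ofNat_ne_top]]
  set C := ENNReal.ofReal x₀ * ENNReal.ofReal (exp x₀)
  refine le_of_forall_exists_mul_le_add_mul (K := c * (C * G univ)) (by finiteness) fun N hN => ?_
  obtain ⟨δ, T, hδ, hδ₁, hT, hw, hNf⟩ :=
    exists_lintegral_truncExp_eq_and_le_lintegral_truncMulExp hG hε₂ (by finiteness) hN
  set f := truncMulExp δ T
  have hf : Continuous f := continuous_truncMulExp δ T
  have hfin : ∫⁻ x, f x ∂G ≠ ⊤ := by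
    refine ne_top_of_le_ne_top ?_ (lintegral_mono fun x => truncMulExp_le_mul_truncExp)
    rw [lintegral_const_mul _ (continuous_truncExp δ T).measurable, hw]
    finiteness
  refine ⟨_, hNf, hfin, ?_⟩
  calc c * ∫⁻ x, f x ∂G
      ≤ c * (C * G univ + ∫⁻ x in Ioi x₀, f x ∂G) := by
        gcongr
        exact lintegral_le_mul_add_setLIntegral_Ioi fun x hx => truncMulExp_le_of_le hδ hδ₁ hx
    _ = c * (C * G univ) + ∫⁻ x in Ioi x₀, f x ∂(c • G) := by
        rw [mul_add, Measure.restrict_smul, lintegral_smul_measure, smul_eq_mul]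
    _ ≤ c * (C * G univ) + ∫⁻ x in Ioi x₀, f x ∂(mconv G G) := by
        gcongr 1
        exact setLIntegral_Ioi_le_of_tail_le hx₀ (monotone_truncMulExp hδ T) hf
          fun _ => truncMulExp_ne_top
    _ ≤ c * (C * G univ) + ∫⁻ x, f x ∂(mconv G G) := by
        gcongr 1
        exact setLIntegral_le_lintegral _ _
    _ ≤ c * (C * G univ) + 2 * ((∫⁻ x, f x ∂G) * ∫⁻ x, truncExp δ T x ∂G) := by
        gcongr 1
        exact lintegral_mconv_self_le_two_mul hG₀ hf.measurable (continuous_truncExp δ T).measurable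
          fun x y hx hy => truncMulExp_add_le hδ hT hx hy
    _ = c * (C * G univ) + 2 * (G univ + ε / 2) * ∫⁻ x, f x ∂G := by rw [hw]; ring

theorem two_mul_measure_univ_le_of_eventually_tail_le (hG : IsHeavyTailed G)
    (hG₀ : ∀ᵐ x ∂G, 0 ≤ x) {c : ℝ≥0∞}
    (h : ∀ᶠ x in atTop, tail (mconv G G) x ≤ tail (c • G) x) : 2 * G univ ≤ c := by
  obtain ⟨x₀, hx₀⟩ := eventually_atTop.1 h
  have hIic : Tendsto (fun A : ℝ => 2 * G (Iic A)) atTop (𝓝 (2 * G univ)) :=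
    ENNReal.Tendsto.const_mul (tendsto_measure_Iic_atTop G) (.inr ENNReal.ofNat_ne_top)
  refine le_of_tendsto' hIic fun A => ?_
  set C₁ := ENNReal.ofReal (exp (1 * A))
  set C₂ := ENNReal.ofReal (exp (1 * x₀))
  set K := 2 * (C₁ * G univ * G (Iic A)) + C₂ * mconv G G univ
  refine le_of_forall_exists_mul_le_add_mul (K := K) (by finiteness) fun N hN => ?_
  obtain ⟨T, -, hT⟩ := exists_lintegral_truncExp_eq hG one_pos (b := G univ + N) le_self_add
    (by finiteness)
  set f := truncExp 1 T
  have hf : Monotone f := monotone_truncExp zero_le_one T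
  refine ⟨∫⁻ x, f x ∂G, hT ▸ le_add_self, hT ▸ by finiteness, ?_⟩
  calc 2 * G (Iic A) * ∫⁻ x, f x ∂G
      ≤ 2 * G (Iic A) * (C₁ * G univ + ∫⁻ x in Ioi A, f x ∂G) := by
        gcongr
        exact lintegral_le_mul_add_setLIntegral_Ioi fun x => truncExp_le_of_le_left zero_le_one
    _ = 2 * (C₁ * G univ * G (Iic A)) + 2 * ((∫⁻ x in Ioi A, f x ∂G) * G (Iic A)) := by ring
    _ ≤ 2 * (C₁ * G univ * G (Iic A)) + ∫⁻ x, f x ∂(mconv G G) := by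
        gcongr 1
        exact two_mul_setLIntegral_Ioi_mul_le_lintegral_mconv_self hG₀ hf A
    _ ≤ K + ∫⁻ x in Ioi x₀, f x ∂(mconv G G) := by
        rw [add_assoc]
        gcongr 1
        exact lintegral_le_mul_add_setLIntegral_Ioi fun x => truncExp_le_of_le_left zero_le_one
    _ ≤ K + ∫⁻ x in Ioi x₀, f x ∂(c • G) := by
        gcongr 1
        exact setLIntegral_Ioi_le_of_tail_le hx₀ hf (continuous_truncExp 1 T)
          fun _ => truncExp_ne_top
    _ ≤ K + ∫⁻ x, f x ∂(c • G) := by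
        gcongr 1
        exact setLIntegral_le_lintegral _ _
    _ = K + c * ∫⁻ x, f x ∂G := by rw [lintegral_smul_measure, smul_eq_mul]

end HeavyTailed

theorem stmt10_general (F : Measure ℝ) [IsFiniteMeasure F] (hsupp : F (Iio 0) = 0)
    (γhat : ℝ) (hγ : 0 ≤ γhat) (hγhat : ENNReal.ofReal γhat = gammaHat F)
    (hφ : phi F γhat < ⊤) :
    liminf (fun x : ℝ => tail (mconv F F) x / tail F x) atTop ≤ 2 * phi F γhat ∧
      2 * phi F γhat ≤ limsup (fun x : ℝ => tail (mconv F F) x / tail F x) atTop := by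
  have hF₀ : ∀ᵐ x ∂F, 0 ≤ x := by simpa [ae_iff, Iio] using hsupp
  have := isFiniteMeasure_expTilt hφ
  have hG := isHeavyTailed_expTilt_of_eq_gammaHat hγ hγhat
  have hG₀ := ae_expTilt_of_ae (γ := γhat) hF₀
  rw [← expTilt_univ]
  constructor
  · refine le_of_forall_lt_imp_le_of_dense fun c hc => ?_
    refine le_two_mul_measure_univ_of_eventually_mul_tail_le hG hG₀ hc.ne_top ?_
    rw [← expTilt_smul, ← expTilt_mconv]
    refine eventually_tail_expTilt_le hγ ((eventually_lt_of_lt_liminf hc).mono fun x hx => ?_)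
    exact ENNReal.mul_le_of_le_div hx.le
  · refine le_of_forall_gt_imp_ge_of_dense fun c hc => ?_
    rcases eq_or_ne c ⊤ with rfl | hc_top
    · exact le_top
    refine two_mul_measure_univ_le_of_eventually_tail_le hG hG₀ ?_
    rw [← expTilt_smul, ← expTilt_mconv]
    refine eventually_tail_expTilt_le hγ ((eventually_lt_of_limsup_lt hc).mono fun x hx => ?_)
    exact (ENNReal.div_le_iff_le_mul (.inr hc_top) (.inl (measure_ne_top F _))).1 hx.le

/-- Lemma 9: if 0 < γ̂ < ∞ and φ(γ̂) < ∞, then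
liminf (F*F)‾/F̄ ≤ 2φ(γ̂) ≤ limsup (F*F)‾/F̄. -/
theorem stmt10 (F : MeasureTheory.Measure ℝ) [MeasureTheory.IsProbabilityMeasure F]
    (hsupp : F (Set.Iio 0) = 0) (hub : ∀ x : ℝ, tail F x ≠ 0)
    (γhat : ℝ) (hγpos : 0 < γhat)
    (hγhat : ENNReal.ofReal γhat = gammaHat F)
    (hφ : phi F γhat < ⊤) :
    liminf (fun x : ℝ => tail (mconv F F) x / tail F x) atTop ≤ 2 * phi F γhat
    ∧
    2 * phi F γhat ≤ limsup (fun x : ℝ => tail (mconv F F) x / tail F x) atTop :=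
  stmt10_general F hsupp γhat hγpos.le hγhat hφ
end
end

section
/- A lattice distribution F on the nonnegative integers with unbounded support belongs to the class S_lattice(γ̂) if and only if: (i) liminf_{n→∞} F{n−1}/F{n} ≥ e^{γ̂}, and (ii) F*F{n} ~ c F{n} as n → ∞ for some c ∈ (0,∞). Moreover, necessarily c = 2φ(γ̂). -/
open MeasureTheory Filter Real Set
open scoped ENNReal Topology

noncomputable section

/-- Laplace transform of a lattice mass function. -/
def lphi (p : ℕ → ℝ≥0∞) (γ : ℝ) : ℝ≥0∞ :=
  ∑' n : ℕ, ENNReal.ofReal (Real.exp (γ * n)) * p n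

/-- Mass function of the convolution: (F*F){n} = Σ_{k≤n} F{k} F{n−k}. -/
def lconv (p : ℕ → ℝ≥0∞) (n : ℕ) : ℝ≥0∞ :=
  ∑ k ∈ Finset.range (n + 1), p k * p (n - k)

/-- The class S_lattice(γ). -/
def memSlat (p : ℕ → ℝ≥0∞) (γ : ℝ) : Prop :=
  lphi p γ < ⊤ ∧
  Tendsto (fun n : ℕ => p (n + 1) / p n) atTop (𝓝 (ENNReal.ofReal (Real.exp (-γ)))) ∧
  Tendsto (fun n : ℕ => lconv p n / p n) atTop (𝓝 (2 * lphi p γ))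

/-!
Tilting to `e^{γn} F{n}` leaves the ratio `F*F{n} / F{n}` unchanged, so one may take `γ = 0`.
If `liminf F{n-1} / F{n} ≥ 1`, Fatou's lemma over the pairs `(j, n - j)` and `(n - j, j)` gives
`liminf F*F{n} / F{n} ≥ 2 φ(0)`.

For the reverse inequality suppose `F*F{n} ≥ c F{n}` for all `n ≥ N`, and fix `δ > 0` and `r > 1`.
Since `φ` is infinite to the right of `0`, the intermediate value theorem yields `M ≥ N` and
`z ∈ [1, r]` with `∑_{n<M} (z^n - 1) F{n} = δ`. The same sum for `F*F` is at most
`(φ(0) + δ)^2 - φ(0)^2`, and the indices below `N` are negligible as `r → 1`, so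
`c δ ≤ 2 φ(0) δ + δ^2`, whence `c ≤ 2 φ(0)` as `δ → 0`.

Finally, if `F*F{n} / F{n} → 2 φ(0) < ∞`, equality holds in Fatou's lemma, so the contribution of
each pair converges: `F{n} / F{n+k} → 1` whenever `F{k} > 0`. Two consecutive such `k` give
`F{n+1} / F{n} → 1`.
-/

section SeriesLimits

theorem tsum_liminf_le_liminf_tsum {ι : Type*} (f : ℕ → ι → ℝ≥0∞) :
    ∑' i, liminf (fun n => f n i) atTop ≤ liminf (fun n => ∑' i, f n i) atTop := by
  let : MeasurableSpace ι := ⊤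
  simpa only [lintegral_count] using
    lintegral_liminf_le (μ := Measure.count) fun n => measurable_from_top (f := f n)

theorem limsup_add_liminf_le_limsup_add {ι : Type*} {l : Filter ι} [l.NeBot] (u v : ι → ℝ≥0∞) :
    limsup u l + liminf v l ≤ limsup (fun i => u i + v i) l := by
  rcases eq_or_ne (limsup u l) 0 with hu | hu
  · rw [hu, zero_add]
    exact (liminf_le_liminf (.of_forall fun i => le_add_self)).trans liminf_le_limsup
  rcases eq_or_ne (liminf v l) 0 with hv | hv
  · rw [hv, add_zero]
    exact limsup_le_limsup (.of_forall fun i => le_self_add)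
  refine le_of_forall_lt fun d hd => ?_
  obtain ⟨b, hb, c, hc, hd⟩ := ENNReal.exists_lt_add_of_lt_add hd hu hv
  refine hd.trans_le (le_limsup_of_frequently_le ?_)
  exact ((frequently_lt_of_lt_limsup (h := hb)).and_eventually (eventually_lt_of_lt_liminf hc)).mono
    fun i hi => add_le_add hi.1.le hi.2.le

theorem tendsto_of_le_liminf_of_limsup_tsum_le {ι : Type*} {f : ℕ → ι → ℝ≥0∞} {g : ι → ℝ≥0∞}
    (hg : ∑' i, g i ≠ ⊤) (hfg : ∀ i, g i ≤ liminf (fun n => f n i) atTop)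
    (hsum : limsup (fun n => ∑' i, f n i) atTop ≤ ∑' i, g i) (k : ι) :
    Tendsto (fun n => f n k) atTop (𝓝 (g k)) := by
  classical
  refine tendsto_of_le_liminf_of_limsup_le (hfg k) ?_
  have split (h : ι → ℝ≥0∞) : ∑' i, h i = h k + ∑' i, if i = k then 0 else h i :=
    ENNReal.tsum_eq_add_tsum_ite k
  have others : ∑' i, (if i = k then 0 else g i) ≤
      liminf (fun n => ∑' i, if i = k then 0 else f n i) atTop :=
    (ENNReal.tsum_le_tsum fun i => by split_ifs <;> simp [hfg i]).trans
      (tsum_liminf_le_liminf_tsum fun n i => if i = k then 0 else f n i)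
  have others_ne_top : ∑' i, (if i = k then 0 else g i) ≠ ⊤ :=
    ne_top_of_le_ne_top hg (by rw [split g]; exact le_add_self)
  refine (ENNReal.add_le_add_iff_right others_ne_top).1 ?_
  calc limsup (fun n => f n k) atTop + ∑' i, (if i = k then 0 else g i)
      ≤ limsup (fun n => f n k) atTop +
          liminf (fun n => ∑' i, if i = k then 0 else f n i) atTop := by gcongr
    _ ≤ limsup (fun n => ∑' i, f n i) atTop := by
        simpa only [← split] using limsup_add_liminf_le_limsup_add (l := atTop)
          (fun n => f n k) fun n => ∑' i, if i = k then 0 else f n i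
    _ ≤ g k + ∑' i, (if i = k then 0 else g i) := split g ▸ hsum

end SeriesLimits

section LowerBound

variable {p : ℕ → ℝ≥0∞}

theorem eventually_ne_zero_and_ne_top_of_liminf_div_succ_pos
    (hp : 0 < liminf (fun n => p n / p (n + 1)) atTop) : ∀ᶠ n in atTop, p n ≠ 0 ∧ p n ≠ ⊤ := by
  have hdiv : ∀ᶠ n in atTop, p n ≠ 0 ∧ p (n + 1) ≠ ⊤ :=
    (eventually_lt_of_lt_liminf hp).mono fun n hn => by
      simpa only [ne_eq, ENNReal.div_eq_zero_iff, not_or] using hn.ne'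
  have htop : ∀ᶠ n in atTop, p n ≠ ⊤ := by
    rw [← map_add_atTop_eq_nat 1]
    exact hdiv.mono fun _ hn => hn.2
  exact (hdiv.and htop).mono fun _ hn => ⟨hn.1.1, hn.2⟩

theorem one_le_liminf_div_add (hp : 1 ≤ liminf (fun n => p n / p (n + 1)) atTop) (k : ℕ) :
    1 ≤ liminf (fun n => p n / p (n + k)) atTop := by
  have hne := eventually_ne_zero_and_ne_top_of_liminf_div_succ_pos (zero_lt_one.trans_le hp)
  induction k with
  | zero =>
    refine le_liminf_of_le (by isBoundedDefault) (hne.mono fun n hn => ?_)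
    rw [add_zero, ENNReal.div_self hn.1 hn.2]
  | succ k ih =>
    calc (1 : ℝ≥0∞) ≤ liminf (fun n => p n / p (n + 1)) atTop *
          liminf (fun n => p (n + 1) / p (n + 1 + k)) atTop := by
          rw [liminf_nat_add (fun n => p n / p (n + k)) 1]
          exact one_le_mul hp ih
      _ ≤ liminf (fun n => p n / p (n + 1) * (p (n + 1) / p (n + 1 + k))) atTop :=
          ENNReal.le_liminf_mul
      _ = liminf (fun n => p n / p (n + (k + 1))) atTop := by
          refine liminf_congr (((tendsto_add_atTop_nat 1).eventually hne).mono fun n hn => ?_)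
          rw [← mul_div_assoc, ENNReal.div_mul_cancel hn.1 hn.2, add_right_comm, add_assoc]

/-- Share of the two pairs `(j, n - j)` and `(n - j, j)` in the ratio `F*F{n} / F{n}`, set to zero
when `n ≤ 2 * j` so that summing over `j` counts no pair twice. -/
def pairShare (p : ℕ → ℝ≥0∞) (n j : ℕ) : ℝ≥0∞ :=
  if 2 * j < n then 2 * p j * (p (n - j) / p n) else 0

theorem pairShare_add {n k : ℕ} (h : k < n) :
    pairShare p (n + k) k = 2 * p k * (p n / p (n + k)) := by
  rw [pairShare, if_pos (by omega), Nat.add_sub_cancel]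

theorem two_mul_sum_ite_le_lconv (p : ℕ → ℝ≥0∞) (n : ℕ) :
    2 * ∑ k ∈ Finset.range (n + 1), (if 2 * k < n then p k * p (n - k) else 0) ≤ lconv p n := by
  have reflect : ∑ k ∈ Finset.range (n + 1), (if 2 * k < n then p k * p (n - k) else 0) =
      ∑ k ∈ Finset.range (n + 1), if n < 2 * k then p k * p (n - k) else 0 := by
    rw [← Finset.sum_flip]
    refine Finset.sum_congr rfl fun k hk => ?_
    have hk : k ≤ n := Finset.mem_range_succ_iff.1 hk
    rw [Nat.sub_sub_self hk]
    exact if_congr (by omega) (mul_comm _ _) rfl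
  rw [two_mul]
  nth_rewrite 2 [reflect]
  rw [← Finset.sum_add_distrib]
  refine Finset.sum_le_sum fun k _ => ?_
  split_ifs <;> first | omega | simp

theorem tsum_pairShare_le (p : ℕ → ℝ≥0∞) (n : ℕ) : ∑' j, pairShare p n j ≤ lconv p n / p n := by
  have hsupp : ∀ j ∉ Finset.range (n + 1), pairShare p n j = 0 := fun j hj =>
    if_neg (by have := Finset.mem_range.not.1 hj; omega)
  calc ∑' j, pairShare p n j
      = (2 * ∑ j ∈ Finset.range (n + 1), if 2 * j < n then p j * p (n - j) else 0) / p n := by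
        rw [tsum_eq_sum hsupp, div_eq_mul_inv, Finset.mul_sum, Finset.sum_mul]
        refine Finset.sum_congr rfl fun j _ => ?_
        rw [pairShare]
        split_ifs
        · simp only [div_eq_mul_inv, mul_assoc]
        · simp only [mul_zero, zero_mul]
    _ ≤ lconv p n / p n := ENNReal.div_le_div_right (two_mul_sum_ite_le_lconv p n) _

theorem two_mul_le_liminf_pairShare (hp : 1 ≤ liminf (fun n => p n / p (n + 1)) atTop) (j : ℕ) :
    2 * p j ≤ liminf (fun n => pairShare p n j) atTop := by
  calc 2 * p j = liminf (fun _ : ℕ => 2 * p j) atTop * 1 := by rw [liminf_const, mul_one]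
    _ ≤ liminf (fun _ : ℕ => 2 * p j) atTop * liminf (fun n => p n / p (n + j)) atTop := by
        gcongr
        exact one_le_liminf_div_add hp j
    _ ≤ liminf (fun n => 2 * p j * (p n / p (n + j))) atTop := ENNReal.le_liminf_mul
    _ = liminf (fun n => pairShare p (n + j) j) atTop :=
        liminf_congr ((eventually_gt_atTop j).mono fun n hn => (pairShare_add hn).symm)
    _ = liminf (fun n => pairShare p n j) atTop := liminf_nat_add (fun n => pairShare p n j) j

theorem two_mul_tsum_le_liminf_lconv_div (hp : 1 ≤ liminf (fun n => p n / p (n + 1)) atTop) :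
    2 * ∑' n, p n ≤ liminf (fun n => lconv p n / p n) atTop := by
  calc 2 * ∑' n, p n ≤ ∑' j, liminf (fun n => pairShare p n j) atTop := by
        rw [← ENNReal.tsum_mul_left]
        exact ENNReal.tsum_le_tsum (two_mul_le_liminf_pairShare hp)
    _ ≤ liminf (fun n => ∑' j, pairShare p n j) atTop := tsum_liminf_le_liminf_tsum _
    _ ≤ liminf (fun n => lconv p n / p n) atTop :=
        liminf_le_liminf (.of_forall (tsum_pairShare_le p))

theorem tendsto_div_add_of_limsup_lconv_div_le
    (hp : 1 ≤ liminf (fun n => p n / p (n + 1)) atTop) (hsum : ∑' n, p n ≠ ⊤)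
    (hconv : limsup (fun n => lconv p n / p n) atTop ≤ 2 * ∑' n, p n) {k : ℕ} (hk : p k ≠ 0) :
    Tendsto (fun n => p n / p (n + k)) atTop (𝓝 1) := by
  have hshare : Tendsto (fun n => pairShare p n k) atTop (𝓝 (2 * p k)) := by
    refine tendsto_of_le_liminf_of_limsup_tsum_le (g := fun j => 2 * p j) ?_
      (two_mul_le_liminf_pairShare hp) ?_ k
    · rw [ENNReal.tsum_mul_left]
      exact ENNReal.mul_ne_top ENNReal.ofNat_ne_top hsum
    · rw [ENNReal.tsum_mul_left]
      exact (limsup_le_limsup (.of_forall (tsum_pairShare_le p))).trans hconv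
  have hk0 : 2 * p k ≠ 0 := mul_ne_zero two_ne_zero hk
  have hktop : 2 * p k ≠ ⊤ :=
    ENNReal.mul_ne_top ENNReal.ofNat_ne_top (ENNReal.ne_top_of_tsum_ne_top hsum k)
  have hdiv := ENNReal.Tendsto.div_const ((tendsto_add_atTop_iff_nat k).2 hshare) (.inr hk0)
  rw [ENNReal.div_self hk0 hktop] at hdiv
  refine hdiv.congr' ((eventually_gt_atTop k).mono fun n hn => ?_)
  rw [pairShare_add hn, ENNReal.mul_div_right_comm, ENNReal.div_self hk0 hktop, one_mul]

theorem tendsto_succ_div_of_limsup_lconv_div_le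
    (hp : 1 ≤ liminf (fun n => p n / p (n + 1)) atTop) (hsum : ∑' n, p n ≠ ⊤)
    (hconv : limsup (fun n => lconv p n / p n) atTop ≤ 2 * ∑' n, p n) :
    Tendsto (fun n => p (n + 1) / p n) atTop (𝓝 1) := by
  have hne := eventually_ne_zero_and_ne_top_of_liminf_div_succ_pos (zero_lt_one.trans_le hp)
  obtain ⟨k, hk, hk'⟩ := (hne.and ((tendsto_add_atTop_nat 1).eventually hne)).exists
  have h₀ := tendsto_div_add_of_limsup_lconv_div_le hp hsum hconv hk.1
  have h₁ := tendsto_div_add_of_limsup_lconv_div_le hp hsum hconv hk'.1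
  have hquot := ENNReal.Tendsto.div ((tendsto_add_atTop_iff_nat 1).2 h₀) (.inl one_ne_zero)
    h₁ (.inl ENNReal.one_ne_top)
  rw [ENNReal.div_self one_ne_zero ENNReal.one_ne_top] at hquot
  refine hquot.congr' (((tendsto_add_atTop_nat (k + 1)).eventually hne).mono fun n hn => ?_)
  rw [add_right_comm n 1 k, add_assoc n k 1, div_eq_mul_inv (p (n + 1)), div_eq_mul_inv (p n),
    ENNReal.mul_div_mul_right _ _ (ENNReal.inv_ne_zero.2 hn.2) (ENNReal.inv_ne_top.2 hn.1)]

end LowerBound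

section UpperBound

open Finset.HasAntidiagonal (antidiagonal)

variable {a : ℕ → ℝ}

theorem sum_pow_sub_one_mul_antidiagonal_le (ha : ∀ n, 0 ≤ a n) {z : ℝ} (hz : 1 ≤ z) (M : ℕ) :
    ∑ n ∈ Finset.range M, (z ^ n - 1) * ∑ ij ∈ antidiagonal n, a ij.1 * a ij.2 ≤
      (∑ n ∈ Finset.range M, z ^ n * a n) ^ 2 - (∑ n ∈ Finset.range M, a n) ^ 2 := by
  let w (ij : ℕ × ℕ) : ℝ := (z ^ (ij.1 + ij.2) - 1) * (a ij.1 * a ij.2)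
  let square := Finset.range M ×ˢ Finset.range M
  have w_nonneg (ij : ℕ × ℕ) : 0 ≤ w ij :=
    mul_nonneg (sub_nonneg.2 (one_le_pow₀ hz)) (mul_nonneg (ha _) (ha _))
  have fiber (n : ℕ) (hn : n ∈ Finset.range M) :
      {ij ∈ square | ij.1 + ij.2 = n} = antidiagonal n := by
    ext ij
    simp only [square, Finset.mem_filter, Finset.mem_product, Finset.mem_range,
      Finset.HasAntidiagonal.mem_antidiagonal] at hn ⊢
    omega
  calc ∑ n ∈ Finset.range M, (z ^ n - 1) * ∑ ij ∈ antidiagonal n, a ij.1 * a ij.2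
      = ∑ n ∈ Finset.range M, ∑ ij ∈ square with ij.1 + ij.2 = n, w ij := by
        refine Finset.sum_congr rfl fun n hn => ?_
        rw [fiber n hn, Finset.mul_sum]
        refine Finset.sum_congr rfl fun ij hij => ?_
        rw [← Finset.HasAntidiagonal.mem_antidiagonal.1 hij]
    _ ≤ ∑ ij ∈ square, w ij :=
        Finset.sum_fiberwise_le_sum_of_sum_fiber_nonneg fun _ _ =>
          Finset.sum_nonneg fun ij _ => w_nonneg ij
    _ = (∑ n ∈ Finset.range M, z ^ n * a n) ^ 2 - (∑ n ∈ Finset.range M, a n) ^ 2 := by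
        simp only [sq, Finset.sum_mul_sum, ← Finset.sum_product', ← Finset.sum_sub_distrib]
        exact Finset.sum_congr rfl fun ij _ => by simp only [w]; ring

theorem exists_sum_pow_sub_one_mul_eq (ha : ∀ n, 0 ≤ a n) (hsum : Summable a) {r : ℝ} (hr : 1 < r)
    (hdiv : ¬ Summable fun n => r ^ n * a n) {δ : ℝ} (hδ : 0 ≤ δ) (N : ℕ) :
    ∃ M ≥ N, ∃ z ∈ Icc 1 r, ∑ n ∈ Finset.range M, (z ^ n - 1) * a n = δ := by
  have hterm (n : ℕ) : 0 ≤ (r ^ n - 1) * a n :=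
    mul_nonneg (sub_nonneg.2 (one_le_pow₀ hr.le)) (ha n)
  have hdiv' : ¬ Summable fun n => (r ^ n - 1) * a n := fun h =>
    hdiv ((h.add hsum).congr fun n => by ring)
  have hlarge : ∀ᶠ M in atTop, δ ≤ ∑ n ∈ Finset.range M, (r ^ n - 1) * a n :=
    ((not_summable_iff_tendsto_nat_atTop_of_nonneg hterm).1 hdiv').eventually_ge_atTop δ
  obtain ⟨M, hδM, hNM⟩ := (hlarge.and (eventually_ge_atTop N)).exists
  have hcont : Continuous fun z : ℝ => ∑ n ∈ Finset.range M, (z ^ n - 1) * a n := by fun_prop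
  exact ⟨M, hNM, intermediate_value_Icc hr.le hcont.continuousOn ⟨by simpa using hδ, hδM⟩⟩

theorem mul_sub_le_of_mul_le_antidiagonal (ha : ∀ n, 0 ≤ a n) (hsum : Summable a) {r : ℝ}
    (hr : 1 < r) (hdiv : ¬ Summable fun n => r ^ n * a n) {c : ℝ} (hc : 0 ≤ c) {N : ℕ}
    (hconv : ∀ n ≥ N, c * a n ≤ ∑ ij ∈ antidiagonal n, a ij.1 * a ij.2)
    {δ : ℝ} (hδ : 0 ≤ δ) :
    c * (δ - ∑ n ∈ Finset.range N, (r ^ n - 1) * a n) ≤ δ * (2 * ∑' n, a n + δ) := by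
  obtain ⟨M, hNM, z, ⟨hz, hzr⟩, hzδ⟩ := exists_sum_pow_sub_one_mul_eq ha hsum hr hdiv hδ N
  have hpow (n : ℕ) : 0 ≤ z ^ n - 1 := sub_nonneg.2 (one_le_pow₀ hz)
  have hzδ' : ∑ n ∈ Finset.range M, z ^ n * a n = ∑ n ∈ Finset.range M, a n + δ := by
    rw [← hzδ, ← Finset.sum_add_distrib]
    exact Finset.sum_congr rfl fun n _ => by ring
  calc c * (δ - ∑ n ∈ Finset.range N, (r ^ n - 1) * a n)
      ≤ c * (δ - ∑ n ∈ Finset.range N, (z ^ n - 1) * a n) := by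
        gcongr with n
        exact ha n
    _ = ∑ n ∈ Finset.Ico N M, (z ^ n - 1) * (c * a n) := by
        rw [← hzδ, ← Finset.sum_Ico_eq_sub _ hNM, Finset.mul_sum]
        exact Finset.sum_congr rfl fun n _ => by ring
    _ ≤ ∑ n ∈ Finset.Ico N M, (z ^ n - 1) * ∑ ij ∈ antidiagonal n, a ij.1 * a ij.2 :=
        Finset.sum_le_sum fun n hn =>
          mul_le_mul_of_nonneg_left (hconv n (Finset.mem_Ico.1 hn).1) (hpow n)
    _ ≤ ∑ n ∈ Finset.range M, (z ^ n - 1) * ∑ ij ∈ antidiagonal n, a ij.1 * a ij.2 := by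
        refine Finset.sum_le_sum_of_subset_of_nonneg (fun n hn => ?_) fun n _ _ => ?_
        · exact Finset.mem_range.2 (Finset.mem_Ico.1 hn).2
        · exact mul_nonneg (hpow n) (Finset.sum_nonneg fun _ _ => mul_nonneg (ha _) (ha _))
    _ ≤ δ * (2 * ∑ n ∈ Finset.range M, a n + δ) := by
        refine (sum_pow_sub_one_mul_antidiagonal_le ha hz M).trans_eq ?_
        rw [hzδ']
        ring
    _ ≤ δ * (2 * ∑' n, a n + δ) := by
        gcongr
        exact hsum.sum_le_tsum _ fun n _ => ha n

theorem le_two_mul_tsum_of_mul_le_antidiagonal (ha : ∀ n, 0 ≤ a n) (hsum : Summable a)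
    (hdiv : ∀ r : ℝ, 1 < r → ¬ Summable fun n => r ^ n * a n) {c : ℝ} (hc : 0 ≤ c)
    (hconv : ∀ᶠ n in atTop, c * a n ≤ ∑ ij ∈ antidiagonal n, a ij.1 * a ij.2) :
    c ≤ 2 * ∑' n, a n := by
  obtain ⟨N, hN⟩ := eventually_atTop.1 hconv
  refine le_of_forall_pos_le_add fun δ hδ => ?_
  have hlim : Tendsto (fun r : ℝ => c * (δ - ∑ n ∈ Finset.range N, (r ^ n - 1) * a n)) (𝓝[>] 1)
      (𝓝 (c * δ)) := by
    refine (Continuous.tendsto' (by fun_prop) _ _ ?_).mono_left nhdsWithin_le_nhds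
    simp only [one_pow, sub_self, zero_mul, Finset.sum_const_zero, sub_zero]
  have hle : c * δ ≤ δ * (2 * ∑' n, a n + δ) :=
    le_of_tendsto hlim (eventually_mem_nhdsWithin.mono fun r hr =>
      mul_sub_le_of_mul_le_antidiagonal ha hsum hr (hdiv r hr) hc hN hδ.le)
  rw [mul_comm] at hle
  exact le_of_mul_le_mul_left hle hδ

theorem lphi_log_ne_top_of_summable {p : ℕ → ℝ≥0∞} (hp : ∀ n, p n ≠ ⊤) {r : ℝ} (hr : 0 < r)
    (h : Summable fun n => r ^ n * (p n).toReal) : lphi p (log r) ≠ ⊤ := by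
  have hterm (n : ℕ) : ENNReal.ofReal (exp (log r * n)) * p n =
      ENNReal.ofReal (r ^ n * (p n).toReal) := by
    rw [mul_comm (log r), exp_nat_mul, exp_log hr, ENNReal.ofReal_mul (pow_nonneg hr.le n),
      ENNReal.ofReal_toReal (hp n)]
  rw [lphi, tsum_congr hterm]
  exact h.tsum_ofReal_ne_top

theorem toReal_lconv {p : ℕ → ℝ≥0∞} (hp : ∀ n, p n ≠ ⊤) (n : ℕ) : (lconv p n).toReal =
    ∑ ij ∈ antidiagonal n, (p ij.1).toReal * (p ij.2).toReal := by
  rw [Finset.Nat.sum_antidiagonal_eq_sum_range_succ fun i j => (p i).toReal * (p j).toReal, lconv,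
    ENNReal.toReal_sum fun k _ => ENNReal.mul_ne_top (hp _) (hp _)]
  simp only [ENNReal.toReal_mul]

theorem lconv_ne_top {p : ℕ → ℝ≥0∞} (hp : ∀ n, p n ≠ ⊤) (n : ℕ) : lconv p n ≠ ⊤ :=
  ENNReal.sum_ne_top.2 fun _ _ => ENNReal.mul_ne_top (hp _) (hp _)

theorem liminf_lconv_div_le {p : ℕ → ℝ≥0∞} (hp : ∀ γ > 0, lphi p γ = ⊤) :
    liminf (fun n => lconv p n / p n) atTop ≤ 2 * ∑' n, p n := by
  rcases eq_or_ne (∑' n, p n) ⊤ with htop | hsum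
  · simp [htop]
  have hfin := ENNReal.ne_top_of_tsum_ne_top hsum
  refine ENNReal.le_of_forall_nnreal_lt fun c hc => ?_
  have hconv : ∀ᶠ n in atTop, (c : ℝ) * (p n).toReal ≤
      ∑ ij ∈ antidiagonal n, (p ij.1).toReal * (p ij.2).toReal := by
    filter_upwards [eventually_lt_of_lt_liminf hc] with n hn
    rw [← toReal_lconv hfin, ← ENNReal.coe_toReal c, ← ENNReal.toReal_mul]
    exact ENNReal.toReal_mono (lconv_ne_top hfin n) (ENNReal.mul_le_of_le_div hn.le)
  have hle := le_two_mul_tsum_of_mul_le_antidiagonal (fun n => ENNReal.toReal_nonneg)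
    (ENNReal.summable_toReal hsum)
    (fun r hr h => lphi_log_ne_top_of_summable hfin (zero_lt_one.trans hr) h
      (hp _ (log_pos hr))) c.2 hconv
  rw [← ENNReal.tsum_toReal_eq hfin] at hle
  rw [← ENNReal.ofReal_toReal hsum, ← ENNReal.ofReal_ofNat 2, ← ENNReal.ofReal_mul zero_le_two,
    ← ENNReal.ofReal_coe_nnreal]
  exact ENNReal.ofReal_le_ofReal hle

end UpperBound

section Tilt

/-- Exponential tilting `e^{γn} F{n}`, which reduces the class `S_lattice(γ)` to `γ = 0`. -/
def tilt (p : ℕ → ℝ≥0∞) (γ : ℝ) (n : ℕ) : ℝ≥0∞ := ENNReal.ofReal (exp (γ * n)) * p n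

variable (p : ℕ → ℝ≥0∞) (γ : ℝ)

theorem tsum_tilt : ∑' n, tilt p γ n = lphi p γ := rfl

theorem lphi_tilt (δ : ℝ) : lphi (tilt p γ) δ = lphi p (δ + γ) := by
  refine tsum_congr fun n => ?_
  rw [tilt, ← mul_assoc, ← ENNReal.ofReal_mul (exp_nonneg _), ← exp_add, add_mul]

theorem lconv_tilt (n : ℕ) : lconv (tilt p γ) n = ENNReal.ofReal (exp (γ * n)) * lconv p n := by
  rw [lconv, lconv, Finset.mul_sum]
  refine Finset.sum_congr rfl fun k hk => ?_
  have hexp : exp (γ * n) = exp (γ * k) * exp (γ * (n - k : ℕ)) := by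
    rw [← exp_add, ← mul_add, ← Nat.cast_add, Nat.add_sub_cancel' (Finset.mem_range_succ_iff.1 hk)]
  rw [hexp, ENNReal.ofReal_mul (exp_nonneg _), tilt, tilt, mul_mul_mul_comm]

theorem lconv_tilt_div (n : ℕ) : lconv (tilt p γ) n / tilt p γ n = lconv p n / p n := by
  rw [lconv_tilt, tilt, ENNReal.mul_div_mul_left _ _ (ENNReal.ofReal_pos.2 (exp_pos _)).ne'
    ENNReal.ofReal_ne_top]

theorem tilt_div_tilt (m n : ℕ) :
    tilt p γ m / tilt p γ n = ENNReal.ofReal (exp (γ * (m - n))) * (p m / p n) := by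
  have hexp : exp (γ * m) = exp (γ * n) * exp (γ * (m - n)) := by
    rw [← exp_add]; congr 1; ring
  rw [tilt, tilt, hexp, ENNReal.ofReal_mul (exp_nonneg _), mul_assoc, ENNReal.mul_div_mul_left _ _
    (ENNReal.ofReal_pos.2 (exp_pos _)).ne' ENNReal.ofReal_ne_top, mul_div_assoc]

variable {p γ}

theorem ofReal_exp_neg_mul_ofReal_exp (x : ℝ) :
    ENNReal.ofReal (exp (-x)) * ENNReal.ofReal (exp x) = 1 := by
  rw [← ENNReal.ofReal_mul (exp_nonneg _), ← exp_add, neg_add_cancel, exp_zero, ENNReal.ofReal_one]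

theorem one_le_liminf_tilt_div_succ
    (hp : ENNReal.ofReal (exp γ) ≤ liminf (fun n => p n / p (n + 1)) atTop) :
    1 ≤ liminf (fun n => tilt p γ n / tilt p γ (n + 1)) atTop := by
  have hratio (n : ℕ) :
      tilt p γ n / tilt p γ (n + 1) = ENNReal.ofReal (exp (-γ)) * (p n / p (n + 1)) := by
    rw [tilt_div_tilt]; congr 3; push_cast; ring
  simp only [hratio]
  rw [ENNReal.liminf_const_mul_of_ne_zero_of_ne_top (ENNReal.ofReal_pos.2 (exp_pos _)).ne'
    ENNReal.ofReal_ne_top, ← ofReal_exp_neg_mul_ofReal_exp γ]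
  gcongr

theorem tendsto_succ_div_of_tendsto_tilt
    (h : Tendsto (fun n => tilt p γ (n + 1) / tilt p γ n) atTop (𝓝 1)) :
    Tendsto (fun n => p (n + 1) / p n) atTop (𝓝 (ENNReal.ofReal (exp (-γ)))) := by
  have hmul := ENNReal.Tendsto.const_mul (a := ENNReal.ofReal (exp (-γ))) h (.inl one_ne_zero)
  rw [mul_one] at hmul
  refine hmul.congr fun n => ?_
  rw [tilt_div_tilt, ← mul_assoc, Nat.cast_succ, add_sub_cancel_left, mul_one,
    ofReal_exp_neg_mul_ofReal_exp, one_mul]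

end Tilt

section LatticeClass

variable {p : ℕ → ℝ≥0∞} {γ : ℝ}

theorem eq_two_mul_lphi_of_tendsto_lconv_div (hγ : ∀ γ' > γ, lphi p γ' = ⊤)
    (hratio : ENNReal.ofReal (exp γ) ≤ liminf (fun n => p n / p (n + 1)) atTop) {c : ℝ≥0∞}
    (hc : Tendsto (fun n => lconv p n / p n) atTop (𝓝 c)) : c = 2 * lphi p γ := by
  rw [← hc.liminf_eq, ← tsum_tilt]
  simp only [← lconv_tilt_div p γ]
  refine le_antisymm (liminf_lconv_div_le fun δ hδ => ?_)
    (two_mul_tsum_le_liminf_lconv_div (one_le_liminf_tilt_div_succ hratio))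
  rw [lphi_tilt]
  exact hγ _ (lt_add_of_pos_left γ hδ)

theorem memSlat_of_tendsto_lconv_div
    (hratio : ENNReal.ofReal (exp γ) ≤ liminf (fun n => p n / p (n + 1)) atTop)
    (hfin : lphi p γ ≠ ⊤) (hconv : Tendsto (fun n => lconv p n / p n) atTop (𝓝 (2 * lphi p γ))) :
    memSlat p γ := by
  refine ⟨hfin.lt_top, tendsto_succ_div_of_tendsto_tilt ?_, hconv⟩
  refine tendsto_succ_div_of_limsup_lconv_div_le (one_le_liminf_tilt_div_succ hratio) hfin ?_
  simp only [lconv_tilt_div, tsum_tilt]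
  exact hconv.limsup_eq.le

theorem eventually_succ_ne_zero_of_memSlat (h : memSlat p γ) : ∀ᶠ n in atTop, p (n + 1) ≠ 0 :=
  (h.2.1.eventually_ne (ENNReal.ofReal_pos.2 (exp_pos _)).ne').mono fun n hn hzero =>
    hn (by rw [hzero, ENNReal.zero_div])

theorem tendsto_div_succ_of_memSlat (h : memSlat p γ) :
    Tendsto (fun n => p n / p (n + 1)) atTop (𝓝 (ENNReal.ofReal (exp γ))) := by
  have hinv := h.2.1.inv
  rw [← ENNReal.ofReal_inv_of_pos (exp_pos _), ← exp_neg, neg_neg] at hinv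
  have hlim : ENNReal.ofReal (exp (-γ)) ≠ 0 := (ENNReal.ofReal_pos.2 (exp_pos _)).ne'
  refine hinv.congr' ?_
  filter_upwards [eventually_succ_ne_zero_of_memSlat h, h.2.1.eventually_ne hlim] with n hsucc hn
  exact ENNReal.inv_div (.inl (ENNReal.div_ne_zero.1 hn).2) (.inr hsucc)

theorem lphi_pos_of_memSlat (h : memSlat p γ) : 0 < lphi p γ := by
  obtain ⟨n, hn⟩ := (eventually_succ_ne_zero_of_memSlat h).exists
  refine pos_iff_ne_zero.2 fun hzero => ?_
  exact mul_ne_zero (ENNReal.ofReal_pos.2 (exp_pos _)).ne' hn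
    (ENNReal.tsum_eq_zero.1 hzero (n + 1))

theorem lphi_eq_top_of_sSup_le (hγ₀ : 0 ≤ γ)
    (hγ : sSup {q : ℝ≥0∞ | ∃ δ : ℝ, q = ENNReal.ofReal δ ∧ lphi p δ < ⊤} ≤ ENNReal.ofReal γ)
    {γ' : ℝ} (hγ' : γ < γ') : lphi p γ' = ⊤ := by
  by_contra hfin
  have hle : ENNReal.ofReal γ' ≤ ENNReal.ofReal γ :=
    (le_sSup (by exact ⟨γ', rfl, lt_top_iff_ne_top.2 hfin⟩)).trans hγ
  exact hγ'.not_ge ((ENNReal.ofReal_le_ofReal_iff hγ₀).1 hle)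

end LatticeClass

theorem stmt15_general (p : ℕ → ℝ≥0∞) (γ : ℝ) (hγ : ∀ γ' > γ, lphi p γ' = ⊤) :
    (memSlat p γ ↔
      ENNReal.ofReal (exp γ) ≤ liminf (fun n => p n / p (n + 1)) atTop ∧
        ∃ c : ℝ, 0 < c ∧
          Tendsto (fun n => lconv p n / p n) atTop (𝓝 (ENNReal.ofReal c))) ∧
    ∀ c : ℝ≥0∞, ENNReal.ofReal (exp γ) ≤ liminf (fun n => p n / p (n + 1)) atTop →
      Tendsto (fun n => lconv p n / p n) atTop (𝓝 c) → c = 2 * lphi p γ := by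
  refine ⟨⟨fun h => ⟨(tendsto_div_succ_of_memSlat h).liminf_eq.ge, (2 * lphi p γ).toReal, ?_, ?_⟩,
    ?_⟩, fun c hratio => eq_two_mul_lphi_of_tendsto_lconv_div hγ hratio⟩
  · exact ENNReal.toReal_pos (mul_ne_zero two_ne_zero (lphi_pos_of_memSlat h).ne')
      (ENNReal.mul_ne_top ENNReal.ofNat_ne_top h.1.ne)
  · rw [ENNReal.ofReal_toReal (ENNReal.mul_ne_top ENNReal.ofNat_ne_top h.1.ne)]
    exact h.2.2
  · rintro ⟨hratio, c, -, hconv⟩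
    have hc := eq_two_mul_lphi_of_tendsto_lconv_div hγ hratio hconv
    have hfin : lphi p γ ≠ ⊤ := fun htop =>
      ENNReal.ofReal_ne_top (hc.trans (by rw [htop, ENNReal.mul_top two_ne_zero]))
    exact memSlat_of_tendsto_lconv_div hratio hfin (hc ▸ hconv)

/-- Theorem 8: F ∈ S_lattice(γ̂) iff liminf F{n−1}/F{n} ≥ e^{γ̂} and
F*F{n} ~ cF{n} for some c ∈ (0,∞); moreover necessarily c = 2φ(γ̂). -/
theorem stmt15 (p : ℕ → ℝ≥0∞) (hpsum : ∑' n, p n = 1)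
    (hub : ∀ n : ℕ, ∃ m : ℕ, n ≤ m ∧ p m ≠ 0)
    (γhat : ℝ) (hγ0 : 0 ≤ γhat)
    (hγhat : ENNReal.ofReal γhat =
      sSup {q : ℝ≥0∞ | ∃ γ : ℝ, q = ENNReal.ofReal γ ∧ lphi p γ < ⊤}) :
    (memSlat p γhat ↔
      (ENNReal.ofReal (Real.exp γhat) ≤
          liminf (fun n : ℕ => p n / p (n + 1)) atTop ∧
        ∃ c : ℝ, 0 < c ∧
          Tendsto (fun n : ℕ => lconv p n / p n) atTop (𝓝 (ENNReal.ofReal c)))) ∧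
    (∀ c : ℝ, 0 < c →
      ENNReal.ofReal (Real.exp γhat) ≤ liminf (fun n : ℕ => p n / p (n + 1)) atTop →
      Tendsto (fun n : ℕ => lconv p n / p n) atTop (𝓝 (ENNReal.ofReal c)) →
      ENNReal.ofReal c = 2 * lphi p γhat) := by
  have h := stmt15_general p γhat fun _ => lphi_eq_top_of_sSup_le hγ0 hγhat.ge
  exact ⟨h.1, fun c _ => h.2 (ENNReal.ofReal c)⟩
end
end
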